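/- Let (R, m, k) be a Cohen–Macaulay commutative Noetherian local ring of dimension d with minimal multiplicity, i.e., there exists an R-regular sequence x₁, …, x_d ∈ m with m² = (x₁, …, x_d)m. Let f₁, …, f_c ∈ m be an R-regular sequence and set S = R/(f₁, …, f_c). Let M be a finitely generated S-module and set i₀ = dim(S) − depth_S(M). (1) If i₀ ≤ 1 and Ext_S^i(M, M) = 0 for some d+c+1 consecutive values of i with all these values ≥ i₀ + 2, then either pd_S M < ∞ or M has finite injective dimension over S. (2) If Ext_S^i(M, M) = 0 for all i₀ + 2 ≤ i ≤ i₀ + (d+c) + 2 and Ext_S^j(M, S) = 0 for all 1 ≤ j ≤ 2i₀ + (d+c) + 2, then M is a free S-module. -/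

import Mathlib

open CategoryTheory IsLocalRing

section Prelim

variable (R : Type) [CommRing R]

/-- `Tor_i^R(M, N) = 0`. -/
noncomputable def TorVanish (M N : Type) [AddCommGroup M] [Module R M]
    [AddCommGroup N] [Module R N] (i : ℕ) : Prop :=
  Subsingleton (((Tor (ModuleCat R) i).obj (ModuleCat.of R M)).obj (ModuleCat.of R N))

/-- `Ext_R^i(M, N) = 0`. -/
noncomputable def ExtVanish (M N : Type) [AddCommGroup M] [Module R M]
    [AddCommGroup N] [Module R N] (i : ℕ) : Prop :=
  Subsingleton (((Ext R (ModuleCat R) i).obj (Opposite.op (ModuleCat.of R M))).obj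
    (ModuleCat.of R N))

/-- `pd_R M < n`, expressed by the standard characterization
`Ext_R^i(M, -) = 0` for all `i ≥ n`. -/
def ProjDimLT (M : Type) [AddCommGroup M] [Module R M] (n : ℕ) : Prop :=
  ∀ (N : ModuleCat R) (i : ℕ), n ≤ i → ExtVanish R M N i

/-- `pd_R M < ∞`. -/
def ProjDimFinite (M : Type) [AddCommGroup M] [Module R M] : Prop :=
  ∃ n, ProjDimLT R M n

/-- `id_R M < n`, expressed by the standard characterization
`Ext_R^i(-, M) = 0` for all `i ≥ n`. -/
def InjDimLT (M : Type) [AddCommGroup M] [Module R M] (n : ℕ) : Prop :=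
  ∀ (N : ModuleCat R) (i : ℕ), n ≤ i → ExtVanish R N M i

/-- `id_R M < ∞`. -/
def InjDimFinite (M : Type) [AddCommGroup M] [Module R M] : Prop :=
  ∃ n, InjDimLT R M n

/-- `M` is a Tor-rigid `R`-module. -/
def TorRigid (M : Type) [AddCommGroup M] [Module R M] : Prop :=
  ∀ (N : ModuleCat R), Module.Finite R N → ∀ n : ℕ, 1 ≤ n → TorVanish R M N n →
    ∀ i : ℕ, n ≤ i → TorVanish R M N i

variable [IsLocalRing R]

/-- The depth of `M`: the supremum of lengths of `M`-regular sequences contained in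
the maximal ideal. -/
noncomputable def depth (M : Type) [AddCommGroup M] [Module R M] : ℕ∞ :=
  sSup {n : ℕ∞ | ∃ rs : List R, (∀ x ∈ rs, x ∈ maximalIdeal R) ∧
    RingTheory.Sequence.IsRegular M rs ∧ (rs.length : ℕ∞) = n}

/-- The dimension of a module, i.e. the Krull dimension of `R ⧸ ann M`. -/
noncomputable def moduleDim (M : Type) [AddCommGroup M] [Module R M] : WithBot ℕ∞ :=
  ringKrullDim (R ⧸ Module.annihilator R M)

/-- `M` is an Ulrich `R`-module of dimension `s` : `M` is nonzero, Cohen–Macaulay of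
dimension `s`, and there is an `M`-regular sequence `x₁, …, x_s` in the maximal ideal
with `mM = (x₁, …, x_s)M`. -/
def IsUlrich (M : Type) [AddCommGroup M] [Module R M] (s : ℕ) : Prop :=
  Nontrivial M ∧ moduleDim R M = (s : ℕ∞) ∧ depth R M = (s : ℕ∞) ∧
  ∃ rs : List R, rs.length = s ∧ (∀ x ∈ rs, x ∈ maximalIdeal R) ∧
    RingTheory.Sequence.IsRegular M rs ∧
    (maximalIdeal R) • (⊤ : Submodule R M) = (Ideal.ofList rs) • ⊤

/-- `R` is a regular local ring: the maximal ideal is generated by `dim R` elements. -/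
def IsRegularLocal : Prop :=
  ∃ s : Finset R, Ideal.span (s : Set R) = maximalIdeal R ∧
    (s.card : WithBot ℕ∞) = ringKrullDim R

/-- `R` (of dimension `d`) has minimal multiplicity: there is an `R`-regular sequence
`x₁, …, x_d` in the maximal ideal `m` with `m² = (x₁, …, x_d)m`. -/
def HasMinimalMultiplicity (d : ℕ) : Prop :=
  ∃ rs : List R, rs.length = d ∧ (∀ x ∈ rs, x ∈ maximalIdeal R) ∧
    RingTheory.Sequence.IsWeaklyRegular R rs ∧
    maximalIdeal R ^ 2 = Ideal.ofList rs * maximalIdeal R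

/-- The `n`-th Betti number of `M` over the local ring `R`, i.e. the dimension over the
residue field `k = R ⧸ m` of `Tor_n^R(M, k)` (which is an `m`-torsion module, so we take
the dimension of its reduction mod `m`). -/
noncomputable def betti (M : Type) [AddCommGroup M] [Module R M] (n : ℕ) : ℕ :=
  Module.finrank (R ⧸ maximalIdeal R)
    ((((Tor (ModuleCat R) n).obj (ModuleCat.of R M)).obj
        (ModuleCat.of R (R ⧸ maximalIdeal R))) ⧸
      (maximalIdeal R • (⊤ : Submodule R
        (((Tor (ModuleCat R) n).obj (ModuleCat.of R M)).obj
          (ModuleCat.of R (R ⧸ maximalIdeal R))))))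

end Prelim



open CategoryTheory IsLocalRing

namespace S19

/-- vanishing of Ext -/
def EV (R : Type) [CommRing R] (M N : Type) [AddCommGroup M] [Module R M]
    [AddCommGroup N] [Module R N] (n : ℕ) : Prop :=
  Subsingleton (Abelian.Ext (ModuleCat.of R M) (ModuleCat.of R N) n)

section
variable {R : Type} [CommRing R] {M N : Type} [AddCommGroup M] [Module R M]
    [AddCommGroup N] [Module R N]

lemma ev_iff {n : ℕ} : EV R M N n ↔
    ∀ x : Abelian.Ext (ModuleCat.of R M) (ModuleCat.of R N) n, x = 0 :=
  ⟨fun h x => @Subsingleton.elim _ h _ _, fun h => ⟨fun a b => by rw [h a, h b]⟩⟩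

lemma extVanish_iff {n : ℕ} (hn : 1 ≤ n) : ExtVanish R M N n ↔ EV R M N n := by
  obtain ⟨p, rfl⟩ : ∃ p, n = p + 1 := ⟨n - 1, by omega⟩
  let P := projectiveResolution (ModuleCat.of R M)
  have h1 : ExtVanish R M N (p+1) ↔
      ∀ (f : P.complex.X (p+1) ⟶ ModuleCat.of R N), P.complex.d (p+2) (p+1) ≫ f = 0 →
        ∃ g : P.complex.X p ⟶ ModuleCat.of R N, P.complex.d (p+1) p ≫ g = f := by
    unfold ExtVanish
    rw [← ModuleCat.isZero_iff_subsingleton, (P.isoExt (R := R) (p+1) (ModuleCat.of R N)).isZero_iff,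
      ← HomologicalComplex.exactAt_iff_isZero_homology,
      HomologicalComplex.exactAt_iff' _ p (p+1) (p+2) (by simp) (by simp),
      ShortComplex.moduleCat_exact_iff]
    rfl
  rw [h1, ev_iff]
  constructor
  · intro h x
    obtain ⟨f, hf, rfl⟩ := P.extMk_surjective x (p+2) rfl
    rw [P.extMk_eq_zero_iff _ _ _ _ p rfl]
    exact h f hf
  · intro h f hf
    have := h (P.extMk f (p+2) rfl hf)
    rwa [P.extMk_eq_zero_iff _ _ _ _ p rfl] at this

end

section seq
variable {R : Type} [CommRing R] {A B C X : Type} [AddCommGroup A] [Module R A]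
    [AddCommGroup B] [Module R B] [AddCommGroup C] [Module R C] [AddCommGroup X] [Module R X]
    {f : A →ₗ[R] B} {g : B →ₗ[R] C}

/-- short complex -/
abbrev sc (f : A →ₗ[R] B) (g : B →ₗ[R] C) (e : Function.Exact f g) : ShortComplex (ModuleCat R) :=
  ModuleCat.shortComplexOfCompEqZero f g e.linearMap_comp_eq_zero

lemma se (hf : Function.Injective f) (e : Function.Exact f g) (hg : Function.Surjective g) :
    (sc f g e).ShortExact :=
  ModuleCat.shortComplex_shortExact _ e hf hg

variable (hf : Function.Injective f) (e : Function.Exact f g) (hg : Function.Surjective g)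
include hf e hg

open Abelian in
lemma cov_mid {n} (h1 : EV R X A n) (h3 : EV R X C n) : EV R X B n := by
  rw [ev_iff] at *
  intro x
  obtain ⟨y, hy⟩ := Ext.covariant_sequence_exact₂ _ (se hf e hg) x (h3 _)
  rw [← hy, h1 y, Ext.zero_comp]

open Abelian in
lemma cov_left {n} (h2 : EV R X B (n+1)) (h3 : EV R X C n) : EV R X A (n+1) := by
  rw [ev_iff] at *
  intro x
  obtain ⟨y, hy⟩ := Ext.covariant_sequence_exact₁ _ (se hf e hg) x (h2 _) rfl
  rw [← hy, h3 y, Ext.zero_comp]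

open Abelian in
lemma cov_right {n} (h2 : EV R X B n) (h1 : EV R X A (n+1)) : EV R X C n := by
  rw [ev_iff] at *
  intro x
  obtain ⟨y, hy⟩ := Ext.covariant_sequence_exact₃ _ (se hf e hg) x rfl (h1 _)
  rw [← hy, h2 y, Ext.zero_comp]

open Abelian in
lemma con_mid {n} (h1 : EV R A X n) (h3 : EV R C X n) : EV R B X n := by
  rw [ev_iff] at *
  intro x
  obtain ⟨y, hy⟩ := Ext.contravariant_sequence_exact₂ (se hf e hg) _ x (h1 _)
  rw [← hy, h3 y, Ext.comp_zero]

open Abelian in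
lemma con_right {n} (h2 : EV R B X (n+1)) (h1 : EV R A X n) : EV R C X (n+1) := by
  rw [ev_iff] at *
  intro x
  obtain ⟨y, hy⟩ := Ext.contravariant_sequence_exact₃ (se hf e hg) _ x (h2 _) (add_comm 1 n)
  rw [← hy, h1 y, Ext.comp_zero]

open Abelian in
lemma con_left {n} (h2 : EV R B X n) (h3 : EV R C X (n+1)) : EV R A X n := by
  rw [ev_iff] at *
  intro x
  obtain ⟨y, hy⟩ := Ext.contravariant_sequence_exact₁ (se hf e hg) _ x (add_comm 1 n) (h3 _)
  rw [← hy, h2 y, Ext.comp_zero]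

end seq

section basic
variable {R : Type} [CommRing R] {A B C X : Type} [AddCommGroup A] [Module R A]
    [AddCommGroup B] [Module R B] [AddCommGroup C] [Module R C] [AddCommGroup X] [Module R X]

lemma ev_proj [Module.Projective R A] (n : ℕ) : EV R A X (n+1) := by
  have : Projective (ModuleCat.of R A) := (IsProjective.iff_projective A).1 inferInstance
  exact Abelian.Ext.subsingleton_of_projective _ _ n

lemma ev_inj [Module.Injective R A] (n : ℕ) : EV R X A (n+1) := by
  have : Injective (ModuleCat.of R A) := Module.injective_object_of_injective_module R A
  exact Abelian.Ext.subsingleton_of_injective _ _ n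

lemma ev_zero_iff : EV R A X 0 ↔ ∀ f : A →ₗ[R] X, f = 0 := by
  unfold EV
  rw [((Abelian.Ext.linearEquiv₀ (R := R)).trans ModuleCat.homLinearEquiv).toEquiv.subsingleton_congr]
  exact ⟨fun h f => Subsingleton.elim _ _, fun h => ⟨fun a b => by rw [h a, h b]⟩⟩

open Abelian in
lemma ev_retract_left (i : A →ₗ[R] B) (p : B →ₗ[R] A) (h : p ∘ₗ i = LinearMap.id) {n}
    (hB : EV R B X n) : EV R A X n := by
  rw [ev_iff] at *
  intro x
  have h1 := hB ((Ext.mk₀ (ModuleCat.ofHom p)).comp x (zero_add n))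
  have h2 : ModuleCat.ofHom i ≫ ModuleCat.ofHom p = 𝟙 _ := by
    rw [← ModuleCat.ofHom_comp, h]; rfl
  have : (Ext.mk₀ (ModuleCat.ofHom i)).comp
      ((Ext.mk₀ (ModuleCat.ofHom p)).comp x (zero_add n)) (zero_add n) = x := by
    rw [Ext.mk₀_comp_mk₀_assoc, h2, Ext.mk₀_id_comp]
  rw [← this, h1, Ext.comp_zero]

open Abelian in
lemma ev_retract_right (i : A →ₗ[R] B) (p : B →ₗ[R] A) (h : p ∘ₗ i = LinearMap.id) {n}
    (hB : EV R X B n) : EV R X A n := by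
  rw [ev_iff] at *
  intro x
  have h1 := hB (x.comp (Ext.mk₀ (ModuleCat.ofHom i)) (add_zero n))
  have h2 : ModuleCat.ofHom i ≫ ModuleCat.ofHom p = 𝟙 _ := by
    rw [← ModuleCat.ofHom_comp, h]; rfl
  have : (x.comp (Ext.mk₀ (ModuleCat.ofHom i)) (add_zero n)).comp
      (Ext.mk₀ (ModuleCat.ofHom p)) (add_zero n) = x := by
    rw [Ext.comp_assoc_of_third_deg_zero, Ext.mk₀_comp_mk₀, h2, Ext.comp_mk₀_id]
  rw [← this, h1, Ext.zero_comp]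

lemma ev_congr_left (i : A ≃ₗ[R] B) {n} : EV R A X n ↔ EV R B X n :=
  ⟨ev_retract_left i.symm.toLinearMap i.toLinearMap (by ext; simp),
   ev_retract_left i.toLinearMap i.symm.toLinearMap (by ext; simp)⟩

lemma ev_congr_right (i : A ≃ₗ[R] B) {n} : EV R X A n ↔ EV R X B n :=
  ⟨ev_retract_right i.symm.toLinearMap i.toLinearMap (by ext; simp),
   ev_retract_right i.toLinearMap i.symm.toLinearMap (by ext; simp)⟩

lemma ev_sub_left [Subsingleton A] (n) : EV R A X n := by
  have : Limits.IsZero (ModuleCat.of R A) := by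
    rw [ModuleCat.isZero_iff_subsingleton]; assumption
  rw [ev_iff]
  intro x
  rw [← Abelian.Ext.mk₀_id_comp x, this.eq_of_src (𝟙 _) 0, Abelian.Ext.mk₀_zero,
    Abelian.Ext.zero_comp]

lemma ev_sub_right [Subsingleton A] (n) : EV R X A n := by
  have : Limits.IsZero (ModuleCat.of R A) := by
    rw [ModuleCat.isZero_iff_subsingleton]; assumption
  rw [ev_iff]
  intro x
  rw [← Abelian.Ext.comp_mk₀_id x, this.eq_of_src (𝟙 _) 0, Abelian.Ext.mk₀_zero,
    Abelian.Ext.comp_zero]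

/-- Ext¹ and extension of maps -/
lemma ev_one_of_ext {f : A →ₗ[R] B} {g : B →ₗ[R] C} (hf : Function.Injective f)
    (e : Function.Exact f g) (hg : Function.Surjective g) (hB : EV R B X 1)
    (h : ∀ φ : A →ₗ[R] X, ∃ ψ : B →ₗ[R] X, ψ ∘ₗ f = φ) : EV R C X 1 := by
  rw [ev_iff] at *
  intro x
  obtain ⟨y, hy⟩ := Abelian.Ext.contravariant_sequence_exact₃ (se hf e hg) _ x (hB _) (add_comm 1 0)
  obtain ⟨φ, rfl⟩ := Abelian.Ext.addEquiv₀.symm.surjective y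
  obtain ⟨ψ, hψ⟩ := h φ.hom
  have : φ = (sc f g e).f ≫ ModuleCat.ofHom ψ := by
    ext1; exact hψ.symm
  rw [← hy, this]
  simp only [Abelian.Ext.addEquiv₀_symm_apply]
  rw [← Abelian.Ext.mk₀_comp_mk₀, ShortComplex.ShortExact.extClass_comp_assoc]

lemma ext_of_ev_one {f : A →ₗ[R] B} {g : B →ₗ[R] C} (hf : Function.Injective f)
    (e : Function.Exact f g) (hg : Function.Surjective g) 
    (h : EV R C X 1) (φ : A →ₗ[R] X) : ∃ ψ : B →ₗ[R] X, ψ ∘ₗ f = φ := by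
  rw [ev_iff] at *
  obtain ⟨y, hy⟩ := Abelian.Ext.contravariant_sequence_exact₁ (se hf e hg) _
    (Abelian.Ext.mk₀ (ModuleCat.ofHom φ)) (add_comm 1 0) (h _)
  obtain ⟨ψ, rfl⟩ := Abelian.Ext.addEquiv₀.symm.surjective y
  simp only [Abelian.Ext.addEquiv₀_symm_apply] at hy
  rw [Abelian.Ext.mk₀_comp_mk₀] at hy
  have := Abelian.Ext.addEquiv₀.symm.injective hy
  exact ⟨ψ.hom, congrArg ModuleCat.Hom.hom this⟩

/-- Ext¹ and lifting of maps -/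
lemma ev_one_of_lift {f : A →ₗ[R] B} {g : B →ₗ[R] C} (hf : Function.Injective f)
    (e : Function.Exact f g) (hg : Function.Surjective g) (hB : EV R X B 1)
    (h : ∀ φ : X →ₗ[R] C, ∃ ψ : X →ₗ[R] B, g ∘ₗ ψ = φ) : EV R X A 1 := by
  rw [ev_iff] at *
  intro x
  obtain ⟨y, hy⟩ := Abelian.Ext.covariant_sequence_exact₁ _ (se hf e hg) x (hB _) (zero_add 1)
  obtain ⟨φ, rfl⟩ := Abelian.Ext.addEquiv₀.symm.surjective y
  obtain ⟨ψ, hψ⟩ := h φ.hom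
  have : φ = ModuleCat.ofHom ψ ≫ (sc f g e).g := by
    ext1; exact hψ.symm
  rw [← hy, this]
  simp only [Abelian.Ext.addEquiv₀_symm_apply]
  rw [← Abelian.Ext.mk₀_comp_mk₀, Abelian.Ext.comp_assoc_of_second_deg_zero]
  exact (congrArg (fun z => Abelian.Ext.comp _ z (zero_add 1)) (se hf e hg).comp_extClass).trans
    (by simp)

lemma lift_of_ev_one {f : A →ₗ[R] B} {g : B →ₗ[R] C} (hf : Function.Injective f)
    (e : Function.Exact f g) (hg : Function.Surjective g) 
    (h : EV R X A 1) (φ : X →ₗ[R] C) : ∃ ψ : X →ₗ[R] B, g ∘ₗ ψ = φ := by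
  rw [ev_iff] at *
  obtain ⟨y, hy⟩ := Abelian.Ext.covariant_sequence_exact₃ _ (se hf e hg)
    (Abelian.Ext.mk₀ (ModuleCat.ofHom φ)) (zero_add 1) (h _)
  obtain ⟨ψ, rfl⟩ := Abelian.Ext.addEquiv₀.symm.surjective y
  simp only [Abelian.Ext.addEquiv₀_symm_apply] at hy
  rw [Abelian.Ext.mk₀_comp_mk₀] at hy
  have := Abelian.Ext.addEquiv₀.symm.injective hy
  exact ⟨ψ.hom, congrArg ModuleCat.Hom.hom this⟩

end basic
end S19

open CategoryTheory IsLocalRing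

namespace S19
open Abelian
open scoped Pointwise

section smul
variable {R : Type} [CommRing R] {A N X Y : Type} [AddCommGroup A] [Module R A]
    [AddCommGroup N] [Module R N] [AddCommGroup X] [Module R X] [AddCommGroup Y] [Module R Y]

lemma mk0_lsmul_comp (x : R) {n : ℕ} (e : Ext (ModuleCat.of R A) (ModuleCat.of R Y) n) :
    (Ext.mk₀ (ModuleCat.ofHom (LinearMap.lsmul R A x))).comp e (zero_add n) = x • e := by
  have : ModuleCat.ofHom (LinearMap.lsmul R A x) = x • 𝟙 (ModuleCat.of R A) := by
    ext a; rfl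
  rw [this, Ext.mk₀_smul, Ext.smul_comp, Ext.mk₀_id_comp]

lemma comp_mk0_lsmul (x : R) {n : ℕ} (e : Ext (ModuleCat.of R A) (ModuleCat.of R Y) n) :
    e.comp (Ext.mk₀ (ModuleCat.ofHom (LinearMap.lsmul R Y x))) (add_zero n) = x • e := by
  have : ModuleCat.ofHom (LinearMap.lsmul R Y x) = x • 𝟙 (ModuleCat.of R Y) := by
    ext a; rfl
  rw [this, Ext.mk₀_smul, Ext.comp_smul, Ext.comp_mk₀_id]

lemma smul_zero_right {x : R} (h : ∀ y : Y, x • y = 0) {n : ℕ}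
    (e : Ext (ModuleCat.of R A) (ModuleCat.of R Y) n) : x • e = 0 := by
  have : LinearMap.lsmul R Y x = 0 := by ext y; exact h y
  rw [← comp_mk0_lsmul, this]
  simp

lemma smul_zero_left {x : R} (h : ∀ y : A, x • y = 0) {n : ℕ}
    (e : Ext (ModuleCat.of R A) (ModuleCat.of R Y) n) : x • e = 0 := by
  have : LinearMap.lsmul R A x = 0 := by ext y; exact h y
  rw [← mk0_lsmul_comp, this]
  simp

lemma qx (x : R) : Function.Exact (LinearMap.lsmul R A x)
    (Submodule.mkQ (x • (⊤ : Submodule R A))) := by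
  rw [LinearMap.exact_iff, Submodule.ker_mkQ]
  ext y
  simp [Submodule.mem_smul_pointwise_iff_exists]

lemma con_surj {x : R} (hx : IsSMulRegular A x) {n : ℕ} (h : EV R (QuotSMulTop x A) Y (n+1))
    (e : Ext (ModuleCat.of R A) (ModuleCat.of R Y) n) : ∃ e', x • e' = e := by
  rw [ev_iff] at h
  obtain ⟨y, hy⟩ := Ext.contravariant_sequence_exact₁
    (se (f := LinearMap.lsmul R A x) hx (qx x) (Submodule.mkQ_surjective _)) _ e (add_comm 1 n) (h _)
  exact ⟨y, by rw [← mk0_lsmul_comp]; exact hy⟩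

lemma con_zero {x : R} (hx : IsSMulRegular A x) (hY : ∀ y : Y, x • y = 0) {n : ℕ}
    (h : EV R (QuotSMulTop x A) Y (n+1)) : EV R A Y n := by
  rw [ev_iff]
  intro e
  obtain ⟨e', rfl⟩ := con_surj hx h e
  exact smul_zero_right hY _

lemma con_nak [IsNoetherianRing R] [IsLocalRing R] [Module.Finite R A] [Module.Finite R Y]
    {x : R} (hxm : x ∈ maximalIdeal R)
    (hx : IsSMulRegular A x) {n : ℕ}
    (h : EV R (QuotSMulTop x A) Y (n+1)) : EV R A Y n := by
  have : Module.Finite R (ModuleCat.of R A) := ‹Module.Finite R A›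
  have : Module.Finite R (ModuleCat.of R Y) := ‹Module.Finite R Y›
  have hfin : Module.Finite R (Ext (ModuleCat.of R A) (ModuleCat.of R Y) n) := inferInstance
  have : (⊤ : Submodule R (Ext (ModuleCat.of R A) (ModuleCat.of R Y) n)) = ⊥ := by
    apply Submodule.eq_bot_of_le_smul_of_le_jacobson_bot (maximalIdeal R) _ hfin.fg_top
    · intro e _
      obtain ⟨e', rfl⟩ := con_surj hx h e
      exact Submodule.smul_mem_smul hxm trivial
    · exact IsLocalRing.maximalIdeal_le_jacobson _
  rw [ev_iff]
  intro e
  have : e ∈ (⊤ : Submodule R (Ext (ModuleCat.of R A) (ModuleCat.of R Y) n)) := trivial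
  simp_all

lemma con_quot {x : R} (hx : IsSMulRegular A x) {n : ℕ}
    (h : EV R A Y n) (h' : EV R A Y (n+1)) : EV R (QuotSMulTop x A) Y (n+1) :=
  con_right (f := LinearMap.lsmul R A x) hx (qx x) (Submodule.mkQ_surjective _) h' h

lemma cov_zero {x : R} (hx : IsSMulRegular N x) (hX : ∀ y : X, x • y = 0) {n : ℕ}
    (h : EV R X (QuotSMulTop x N) n) : EV R X N n := by
  rw [ev_iff] at *
  intro e
  obtain ⟨e', he⟩ := Ext.covariant_sequence_exact₂ _
    (se (f := LinearMap.lsmul R N x) hx (qx x) (Submodule.mkQ_surjective _)) e (h _)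
  rw [← he]
  exact (comp_mk0_lsmul x e').trans (smul_zero_left hX _)

lemma cov_zero_succ {x : R} (hx : IsSMulRegular N x) (hX : ∀ y : X, x • y = 0) {n : ℕ}
    (h : EV R X (QuotSMulTop x N) n) : EV R X N (n+1) := by
  rw [ev_iff] at *
  intro e
  obtain ⟨e', he⟩ := Ext.covariant_sequence_exact₁ _
    (se (f := LinearMap.lsmul R N x) hx (qx x) (Submodule.mkQ_surjective _)) e
    ((comp_mk0_lsmul x e).trans (smul_zero_left hX _)) rfl
  rw [← he, h e', Ext.zero_comp]

lemma cov_zero_zero {x : R} (hx : IsSMulRegular N x) (hX : ∀ y : X, x • y = 0) : EV R X N 0 := by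
  rw [ev_zero_iff]
  intro f
  ext y
  apply hx
  simp [← map_smul, hX]

lemma cov_quot {x : R} (hx : IsSMulRegular N x) {n : ℕ}
    (h : EV R X N n) (h' : EV R X N (n+1)) : EV R X (QuotSMulTop x N) n :=
  cov_right (f := LinearMap.lsmul R N x) hx (qx x) (Submodule.mkQ_surjective _) h h'

lemma ev_pi_left {n : ℕ} (h : EV R A Y n) (r : ℕ) : EV R (Fin r → A) Y n := by
  induction r with
  | zero => exact ev_sub_left _
  | succ r ih =>
    rw [← ev_congr_left (Fin.consLinearEquiv R (fun _ : Fin (r+1) => A))]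
    exact con_mid (f := LinearMap.inl R A (Fin r → A)) (g := LinearMap.snd R A (Fin r → A))
      LinearMap.inl_injective Function.Exact.inl_snd LinearMap.snd_surjective h ih

lemma ev_pi_right {n : ℕ} (h : EV R X A n) (r : ℕ) : EV R X (Fin r → A) n := by
  induction r with
  | zero => exact ev_sub_right _
  | succ r ih =>
    rw [← ev_congr_right (Fin.consLinearEquiv R (fun _ : Fin (r+1) => A))]
    exact cov_mid (f := LinearMap.inl R A (Fin r → A)) (g := LinearMap.snd R A (Fin r → A))
      LinearMap.inl_injective Function.Exact.inl_snd LinearMap.snd_surjective h ih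

lemma ev_of_pi_left {n r : ℕ} (h : EV R (Fin (r+1) → A) Y n) : EV R A Y n :=
  ev_retract_left (LinearMap.single R (fun _ : Fin (r+1) => A) 0) (LinearMap.proj 0)
    (by ext; simp) h

lemma ev_of_pi_right {n r : ℕ} (h : EV R X (Fin (r+1) → A) n) : EV R X A n :=
  ev_retract_right (LinearMap.single R (fun _ : Fin (r+1) => A) 0) (LinearMap.proj 0)
    (by ext; simp) h

lemma kspace [IsLocalRing R] [Module.Finite R A] (h : ∀ x ∈ maximalIdeal R, ∀ a : A, x • a = 0) :
    ∃ r, Nonempty (A ≃ₗ[R] (Fin r → R ⧸ maximalIdeal R)) := by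
  let : Field (R ⧸ maximalIdeal R) := Ideal.Quotient.field _
  have ht : Module.IsTorsionBySet R A (maximalIdeal R) := fun a x => h x x.2 a
  let := ht.module
  have : IsScalarTower R (R ⧸ maximalIdeal R) A := ht.isScalarTower (S := R)
  have : Module.Finite (R ⧸ maximalIdeal R) A := Module.Finite.of_restrictScalars_finite R _ _
  exact ⟨_, ⟨(Module.finBasis (R ⧸ maximalIdeal R) A).equivFun.restrictScalars R⟩⟩

section
variable [IsLocalRing R] [Module.Finite R A] (hA : ∀ x ∈ maximalIdeal R, ∀ a : A, x • a = 0)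
include hA

lemma ev_v_left {n} (h : EV R (R ⧸ maximalIdeal R) Y n) : EV R A Y n := by
  obtain ⟨r, ⟨i⟩⟩ := kspace hA
  rw [ev_congr_left i]
  exact ev_pi_left h r

lemma ev_v_right {n} (h : EV R X (R ⧸ maximalIdeal R) n) : EV R X A n := by
  obtain ⟨r, ⟨i⟩⟩ := kspace hA
  rw [ev_congr_right i]
  exact ev_pi_right h r

lemma ev_of_v_left [Nontrivial A] {n} (h : EV R A Y n) : EV R (R ⧸ maximalIdeal R) Y n := by
  obtain ⟨r, ⟨i⟩⟩ := kspace hA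
  rw [ev_congr_left i] at h
  cases r with
  | zero => exact absurd (i.toEquiv.subsingleton) (not_subsingleton A)
  | succ r => exact ev_of_pi_left h

lemma ev_of_v_right [Nontrivial A] {n} (h : EV R X A n) : EV R X (R ⧸ maximalIdeal R) n := by
  obtain ⟨r, ⟨i⟩⟩ := kspace hA
  rw [ev_congr_right i] at h
  cases r with
  | zero => exact absurd (i.toEquiv.subsingleton) (not_subsingleton A)
  | succ r => exact ev_of_pi_right h

end
end smul
end S19

open CategoryTheory IsLocalRing

namespace S19
open Abelian TensorProduct

section shift
variable {R : Type} [CommRing R] {A B C X : Type} [AddCommGroup A] [Module R A]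
    [AddCommGroup B] [Module R B] [AddCommGroup C] [Module R C] [AddCommGroup X] [Module R X]
    {f : A →ₗ[R] B} {g : B →ₗ[R] C}
    (hf : Function.Injective f) (e : Function.Exact f g) (hg : Function.Surjective g)
include hf e hg

lemma shift_proj [Module.Projective R B] {n : ℕ} : EV R C X (n+2) ↔ EV R A X (n+1) :=
  ⟨fun h => con_left hf e hg (ev_proj _) h, fun h => con_right hf e hg (ev_proj _) h⟩

lemma shift_inj [Module.Injective R B] {n : ℕ} : EV R X A (n+2) ↔ EV R X C (n+1) :=
  ⟨fun h => cov_right hf e hg (ev_inj _) h, fun h => cov_left hf e hg (ev_inj _) h⟩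

end shift

lemma factor {R M N P : Type} [CommRing R] [AddCommGroup M] [AddCommGroup N] [AddCommGroup P]
    [Module R M] [Module R N] [Module R P] (p : M →ₗ[R] N) (hp : Function.Surjective p)
    (g : M →ₗ[R] P) (h : ∀ x, p x = 0 → g x = 0) : ∃ k : N →ₗ[R] P, ∀ x, k (p x) = g x := by
  refine ⟨(LinearMap.ker p).liftQ g (fun x hx => h x hx) ∘ₗ
    (LinearMap.quotKerEquivOfSurjective p hp).symm.toLinearMap, fun x => ?_⟩
  have : (LinearMap.quotKerEquivOfSurjective p hp).symm (p x) = Submodule.Quotient.mk x := by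
    rw [LinearEquiv.symm_apply_eq]; rfl
  rw [LinearMap.comp_apply, LinearEquiv.coe_coe, this]
  rfl

section ring
variable {A B : Type} [CommRing A] [CommRing B] [Algebra A B]

/-- reduction map -/
abbrev rd (A B : Type) [CommRing A] [CommRing B] [Algebra A B] (K : Type) [AddCommGroup K]
    [Module A K] : K →ₗ[A] B ⊗[A] K := TensorProduct.mk A B K 1

variable {K N M : Type} [AddCommGroup K] [Module A K] [AddCommGroup N] [Module A N] [Module B N]
  [IsScalarTower A B N] [AddCommGroup M] [Module A M] [Module B M]
  [IsScalarTower A B M]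

lemma rd_surj (hs : Function.Surjective (algebraMap A B)) : Function.Surjective (rd A B K) := by
  intro z
  induction z using TensorProduct.induction_on with
  | zero => exact ⟨0, map_zero _⟩
  | tmul b k =>
    obtain ⟨a, rfl⟩ := hs b
    refine ⟨a • k, ?_⟩
    simp [Algebra.algebraMap_eq_smul_one, TensorProduct.smul_tmul]
  | add x y hx hy =>
    obtain ⟨a, rfl⟩ := hx
    obtain ⟨b, rfl⟩ := hy
    exact ⟨a + b, map_add _ _ _⟩

variable {f : A}

lemma rd_zero (hs : Function.Surjective (algebraMap A B))
    (hk : RingHom.ker (algebraMap A B) = Ideal.span {f}) (k : K) :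
    rd A B K k = 0 ↔ ∃ k', f • k' = k := by
  have e1 : Function.Exact (LinearMap.lsmul A A f) (Algebra.linearMap A B) := by
    intro a
    have : (Algebra.linearMap A B) a = 0 ↔ a ∈ RingHom.ker (algebraMap A B) := Iff.rfl
    rw [this, hk, Ideal.mem_span_singleton']
    simp [mul_comm]
  have e2 := rTensor_exact K e1 hs
  have h := e2 ((1 : A) ⊗ₜ k)
  have h3 : (Algebra.linearMap A B).rTensor K ((1 : A) ⊗ₜ k) = rd A B K k := by simp
  rw [h3] at h
  rw [h]
  constructor
  · rintro ⟨z, hz⟩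
    obtain ⟨k', rfl⟩ := (TensorProduct.lid A K).symm.surjective z
    refine ⟨k', ?_⟩
    have := congrArg (TensorProduct.lid A K) hz
    simpa using this
  · rintro ⟨k', rfl⟩
    refine ⟨1 ⊗ₜ k', ?_⟩
    simp [TensorProduct.tmul_smul, TensorProduct.smul_tmul']

lemma fkill (hk : RingHom.ker (algebraMap A B) = Ideal.span {f}) (n : N) : f • n = 0 := by
  have : algebraMap A B f = 0 := by
    rw [← RingHom.mem_ker, hk]; exact Ideal.mem_span_singleton_self f
  rw [← algebraMap_smul B f n, this, zero_smul]

lemma bc_exact (hs : Function.Surjective (algebraMap A B))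
    (hk : RingHom.ker (algebraMap A B) = Ideal.span {f}) {K' F : Type} [AddCommGroup K'] [Module A K']
    [AddCommGroup F] [Module A F] {i : K' →ₗ[A] F} {p : F →ₗ[A] K} (hi : Function.Injective i)
    (e : Function.Exact i p) (hp : Function.Surjective p) (hK : IsSMulRegular K f) :
    Function.Injective (i.baseChange B) ∧ Function.Exact (i.baseChange B) (p.baseChange B) ∧
      Function.Surjective (p.baseChange B) := by
  refine ⟨?_, lTensor_exact B e hp, LinearMap.lTensor_surjective B hp⟩
  rw [injective_iff_map_eq_zero]
  intro z hz
  obtain ⟨k, rfl⟩ := rd_surj hs z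
  have h1 : rd A B F (i k) = 0 := by simpa using hz
  obtain ⟨u, hu⟩ := (rd_zero hs hk _).1 h1
  have h2 : p u = 0 := by
    apply hK
    simp only [smul_zero]
    rw [← map_smul, hu, e.apply_apply_eq_zero]
  obtain ⟨k', rfl⟩ := (e u).1 h2
  rw [rd_zero hs hk]
  exact ⟨k', hi (by rw [map_smul, hu])⟩

lemma reg_free {F : Type} [AddCommGroup F] [Module A F] [Module.Free A F] (hfA : IsSMulRegular A f) :
    IsSMulRegular F f := by
  let b := Module.Free.chooseBasis A F
  intro x y hxy
  apply b.repr.injective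
  ext i
  apply hfA
  have := congrArg (fun z => b.repr z i) hxy
  simpa using this

lemma pres (K : Type) [AddCommGroup K] [Module A K] :
    ∃ (K' F : ModuleCat.{0} A) (_ : Module.Free A F) (i : K' →ₗ[A] F) (p : F →ₗ[A] K),
      Function.Injective i ∧ Function.Exact i p ∧ Function.Surjective p ∧
      ∀ f : A, IsSMulRegular A f → IsSMulRegular K' f := by
  let p : (K →₀ A) →ₗ[A] K := Finsupp.linearCombination A (id : K → K)
  refine ⟨ModuleCat.of A (LinearMap.ker p), ModuleCat.of A (K →₀ A), ?_, (LinearMap.ker p).subtype,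
    p, Subtype.val_injective, LinearMap.exact_subtype_ker_map p,
    Finsupp.linearCombination_id_surjective A K, ?_⟩
  · change Module.Free A (K →₀ A); infer_instance
  · intro f hfA
    exact (reg_free (F := K →₀ A) hfA).submodule _ _

lemma cr (hs : Function.Surjective (algebraMap A B))
    (hk : RingHom.ker (algebraMap A B) = Ideal.span {f}) (hfA : IsSMulRegular A f) (i : ℕ) :
    ∀ (K : Type) [AddCommGroup K] [Module A K], IsSMulRegular K f →
      (EV A K N (i+1) ↔ EV B (B ⊗[A] K) N (i+1)) := by
  induction i with
  | zero =>
    intro K _ _ hK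
    obtain ⟨K', F, _, i, p, hi, e, hp, hr⟩ := pres (A := A) K
    obtain ⟨b1, b2, b3⟩ := bc_exact hs hk hi e hp hK
    constructor
    · intro h
      refine ev_one_of_ext b1 b2 b3 (ev_proj _) fun φ => ?_
      obtain ⟨ψ, hψ⟩ := ext_of_ev_one hi e hp h (φ.restrictScalars A ∘ₗ rd A B K')
      refine ⟨ψ.liftBaseChange B, ?_⟩
      ext x
      have := LinearMap.congr_fun hψ x
      simpa using this
    · intro h
      refine ev_one_of_ext hi e hp (ev_proj _) fun φ => ?_
      obtain ⟨ψ, hψ⟩ := ext_of_ev_one b1 b2 b3 h (φ.liftBaseChange B)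
      refine ⟨ψ.restrictScalars A ∘ₗ rd A B F, ?_⟩
      ext x
      have := LinearMap.congr_fun hψ (1 ⊗ₜ x)
      simpa using this
  | succ i ih =>
    intro K _ _ hK
    obtain ⟨K', F, _, i, p, hi, e, hp, hr⟩ := pres (A := A) K
    obtain ⟨b1, b2, b3⟩ := bc_exact hs hk hi e hp hK
    exact (shift_proj hi e hp).trans ((ih K' (hr f hfA)).trans (shift_proj b1 b2 b3).symm)

/-- packaged four term sequence -/
lemma four (hs : Function.Surjective (algebraMap A B))
    (hk : RingHom.ker (algebraMap A B) = Ideal.span {f}) (hfA : IsSMulRegular A f) :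
    ∃ (Q W P : ModuleCat.{0} B) (_ : Module.Projective B P) (t : M →ₗ[B] Q) (g : Q →ₗ[B] W)
      (j : W →ₗ[B] P) (p : P →ₗ[B] M),
      Function.Injective t ∧ Function.Exact t g ∧ Function.Surjective g ∧
      Function.Injective j ∧ Function.Exact j p ∧ Function.Surjective p ∧
      ∀ (N : Type) [AddCommGroup N] [Module A N] [Module B N] [IsScalarTower A B N] (i : ℕ),
        (EV A M N (i+2) ↔ EV B Q N (i+1)) := by
  let F := M →₀ A
  let p : F →ₗ[A] M := Finsupp.linearCombination A (id : M → M)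
  have hp : Function.Surjective p := Finsupp.linearCombination_id_surjective A M
  let K := LinearMap.ker p
  have e : Function.Exact K.subtype p := LinearMap.exact_subtype_ker_map p
  have hi : Function.Injective K.subtype := Subtype.val_injective
  let p' : B ⊗[A] F →ₗ[B] M := p.liftBaseChange B
  have hp' : ∀ u, p' (rd A B F u) = p u := fun u => by simp [p']
  let j' : B ⊗[A] K →ₗ[B] B ⊗[A] F := K.subtype.baseChange B
  have hj' : ∀ u, j' (rd A B K u) = rd A B F u := fun u => by simp [j']
  have hregF : IsSMulRegular F f := reg_free hfA
  have hregK : IsSMulRegular K f := hregF.submodule _ _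
  let mu : F →ₗ[A] K := LinearMap.codRestrict K (LinearMap.lsmul A F f) (fun u => by
    simp only [K, LinearMap.mem_ker, LinearMap.lsmul_apply, map_smul]; exact fkill hk _)
  have hmu : ∀ u, (mu u : F) = f • u := fun u => rfl
  obtain ⟨t, ht⟩ := factor p hp (rd A B K ∘ₗ mu) (fun x hx => by
    simp only [LinearMap.comp_apply]
    rw [rd_zero hs hk]
    exact ⟨⟨x, hx⟩, by ext1; rw [hmu]; rfl⟩)
  have htinj : Function.Injective t := by
    rw [injective_iff_map_eq_zero]
    intro m hm
    obtain ⟨u, rfl⟩ := hp m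
    rw [ht, LinearMap.comp_apply, rd_zero hs hk] at hm
    obtain ⟨k', hk'⟩ := hm
    have h1 : f • (k' : F) = f • u := (congrArg Subtype.val hk').trans (hmu u)
    rw [← hregF h1]
    exact k'.2
  have hj0 : ∀ z, p' (j' z) = 0 := by
    intro z
    obtain ⟨k, rfl⟩ := rd_surj (K := ↥K) hs z
    rw [hj', hp']; exact k.2
  have hex1 : ∀ z, j' z = 0 ↔ z ∈ Set.range t := by
    intro z
    obtain ⟨k, rfl⟩ := rd_surj (K := ↥K) hs z
    rw [hj', rd_zero hs hk]
    constructor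
    · rintro ⟨u, hu⟩
      refine ⟨p u, ?_⟩
      rw [ht, LinearMap.comp_apply]
      congr 1
      exact Subtype.ext hu
    · rintro ⟨m, hm⟩
      obtain ⟨u, rfl⟩ := hp m
      rw [ht, LinearMap.comp_apply] at hm
      have : rd A B F (k : F) = 0 := by
        rw [← hj', ← hm, hj', rd_zero hs hk]
        exact ⟨u, rfl⟩
      exact (rd_zero hs hk _).1 this
  have hex2 : ∀ z, p' z = 0 → z ∈ LinearMap.range j' := by
    intro z hz
    obtain ⟨u, rfl⟩ := rd_surj hs z
    rw [hp'] at hz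
    exact ⟨rd A B K ⟨u, hz⟩, hj' _⟩
  refine ⟨ModuleCat.of B (B ⊗[A] K), ModuleCat.of B (LinearMap.range j'),
    ModuleCat.of B (B ⊗[A] F), ?_, t.extendScalarsOfSurjective hs, j'.rangeRestrict,
    (LinearMap.range j').subtype, p', htinj, ?_, j'.surjective_rangeRestrict,
    Subtype.val_injective, ?_, ?_, ?_⟩
  · change Module.Projective B (B ⊗[A] F); infer_instance
  · intro z
    have : j'.rangeRestrict z = 0 ↔ j' z = 0 := by
      rw [Subtype.ext_iff]; rfl
    rw [this]
    exact hex1 z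
  · intro z
    constructor
    · intro h; exact ⟨⟨z, hex2 z h⟩, rfl⟩
    · rintro ⟨⟨_, ⟨y, rfl⟩⟩, rfl⟩; exact hj0 y
  · intro m
    obtain ⟨u, rfl⟩ := hp m
    exact ⟨_, hp' u⟩
  · intro N _ _ _ _ i
    exact (shift_proj hi e hp).trans (cr hs hk hfA i K hregK)

lemma step_up (hs : Function.Surjective (algebraMap A B))
    (hk : RingHom.ker (algebraMap A B) = Ideal.span {f}) (hfA : IsSMulRegular A f) (i : ℕ)
    (h1 : EV B M N (i+1)) (h2 : EV B M N (i+2)) : EV A M N (i+2) := by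
  obtain ⟨Q, W, P, _, t, g, j, p, a1, a2, a3, b1, b2, b3, H⟩ := four (M := M) hs hk hfA
  rw [H]
  exact con_mid a1 a2 a3 h1 (con_left b1 b2 b3 (ev_proj _) h2)

/-- pd descends -/
lemma step_pd (hs : Function.Surjective (algebraMap A B))
    (hk : RingHom.ker (algebraMap A B) = Ideal.span {f}) (hfA : IsSMulRegular A f) (q n : ℕ)
    (hq : 1 ≤ q) (hn : EV B M M (2*n)) (h : ∀ i, q ≤ i → EV A M N i) :
    ∀ i, q ≤ i → EV B M N i := by
  obtain ⟨Q, W, P, _, t, g, j, p, a1, a2, a3, b1, b2, b3, H⟩ := four (M := M) hs hk hfA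
  have hQ : ∀ i, q ≤ i → EV B Q N i := by
    intro i hi
    obtain ⟨i', rfl⟩ : ∃ i', i = i' + 1 := ⟨i - 1, by omega⟩
    rw [← H]
    exact h _ (by omega)
  have key : ∀ n, ∃ X : Ext (ModuleCat.of B M) (ModuleCat.of B M) (2*n), ∀ i, q ≤ i → ∀
      e : Ext (ModuleCat.of B M) (ModuleCat.of B N) (2*n+i), ∃ e', X.comp e' rfl = e := by
    intro n
    induction n with
    | zero =>
      refine ⟨Ext.mk₀ (𝟙 _), fun i hi e => ?_⟩
      obtain ⟨s, hs⟩ : ∃ s, s = 2 * 0 + i := ⟨_, rfl⟩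
      have : s = i := by omega
      subst this
      have key2 : ∀ (k : ℕ) (hk : 0 + s = k) (e : Ext (ModuleCat.of B M) (ModuleCat.of B N) k),
          ∃ e', (Ext.mk₀ (𝟙 (ModuleCat.of B M))).comp e' hk = e := by
        intro k hk e
        obtain rfl : s = k := by omega
        exact ⟨e, Ext.mk₀_id_comp e⟩
      exact key2 _ _ e
    | succ n ih =>
      obtain ⟨X, hX⟩ := ih
      let chi := (se b1 b2 b3).extClass.comp (se a1 a2 a3).extClass (rfl : 1 + 1 = 2)
      refine ⟨X.comp chi (by omega : 2 * n + 2 = 2 * (n+1)), fun i hi e => ?_⟩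
      have key2 : ∀ (k : ℕ) (hk : 2 * n + (2 + i) = k)
          (hk2 : 2 * (n+1) + i = k)
          (e : Ext (ModuleCat.of B M) (ModuleCat.of B N) k),
          ∃ e', (X.comp chi (by omega : 2 * n + 2 = 2 * (n+1))).comp e' hk2 = e := by
        intro k hk hk2 e
        subst hk
        obtain ⟨e1, rfl⟩ := hX (2+i) (by omega) e
        obtain ⟨e2, he2⟩ := Ext.contravariant_sequence_exact₃ (se b1 b2 b3) _ e1
          (by
            have : EV B P N ((1+i)+1) := ev_proj _
            exact (ev_iff.1 (by convert this using 1; omega)) _) (by omega : 1 + (1 + i) = 2 + i)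
        obtain ⟨e3, he3⟩ := Ext.contravariant_sequence_exact₃ (se a1 a2 a3) _ e2
          (ev_iff.1 (hQ _ (by omega)) _) rfl
        refine ⟨e3, ?_⟩
        rw [← he2, ← he3]
        rw [Ext.comp_assoc X chi e3 (by omega) (rfl : 2 + i = 2 + i) (by omega)]
        congr 1
        exact Ext.comp_assoc _ _ _ _ _ (by omega)
      exact key2 _ (by omega) rfl e
  have large : ∀ i, q ≤ i → EV B M N (2*n+i) := by
    intro i hi
    obtain ⟨X, hX⟩ := key n
    rw [ev_iff] at *
    intro e
    obtain ⟨e', rfl⟩ := hX i hi e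
    rw [hn X, Ext.zero_comp]
  have desc : ∀ m i, q ≤ i → EV B M N (2*m+i) → EV B M N i := by
    intro m
    induction m with
    | zero => intro i _ h; simpa using h
    | succ m ih =>
      intro i hi h
      have h1 : EV B M N (i+2) := ih (i+2) (by omega) (by convert h using 1; omega)
      exact con_left a1 a2 a3 (hQ i hi) (con_left b1 b2 b3 (ev_proj _) h1)
  intro i hi
  exact desc n i hi (large i hi)

end ring
end S19

open CategoryTheory IsLocalRing

namespace S19
open Abelian

section tors
variable {A : Type} [CommRing A] {f : A}

/-- torsion submodule -/
abbrev TT (f : A) (C : Type) [AddCommGroup C] [Module A C] : Type := Submodule.torsionBy A C f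

variable {C C' : Type} [AddCommGroup C] [Module A C] [AddCommGroup C'] [Module A C']
  {N M : Type} [AddCommGroup N] [Module A N] [Module (A ⧸ Ideal.span {f}) N]
  [IsScalarTower A (A ⧸ Ideal.span {f}) N]
  [AddCommGroup M] [Module A M] [Module (A ⧸ Ideal.span {f}) M]
  [IsScalarTower A (A ⧸ Ideal.span {f}) M]

lemma qs : Function.Surjective (algebraMap A (A ⧸ Ideal.span {f})) := Ideal.Quotient.mk_surjective

lemma qk : RingHom.ker (algebraMap A (A ⧸ Ideal.span {f})) = Ideal.span {f} := Ideal.mk_ker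

/-- lift -/
def tlift (φ : N →ₗ[A] C) : N →ₗ[A ⧸ Ideal.span {f}] TT f C :=
  (φ.codRestrict (Submodule.torsionBy A C f) (fun n => by
    rw [Submodule.mem_torsionBy_iff, ← map_smul, fkill (B := A ⧸ Ideal.span {f}) qk,
      map_zero])).extendScalarsOfSurjective qs

@[simp] lemma tlift_apply (φ : N →ₗ[A] C) (n : N) :
  ((tlift φ n : TT f C) : C) = φ n := rfl

/-- underlying -/
def tval (φ : N →ₗ[A ⧸ Ideal.span {f}] TT f C) : N →ₗ[A] C :=
  (Submodule.torsionBy A C f).subtype ∘ₗ φ.restrictScalars A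

@[simp] lemma tval_apply (φ : N →ₗ[A ⧸ Ideal.span {f}] TT f C) (n : N) :
  tval φ n = (φ n : C) := rfl

/-- functoriality -/
def tmap (g : C →ₗ[A] C') : TT f C →ₗ[A ⧸ Ideal.span {f}] TT f C' :=
  tlift (g ∘ₗ (Submodule.torsionBy A C f).subtype)

@[simp] lemma tmap_apply (g : C →ₗ[A] C') (n : TT f C) :
  ((tmap g n : TT f C') : C') = g n := rfl

lemma t_exact {D : Type} [AddCommGroup D] [Module A D] {i : C →ₗ[A] D} {p : D →ₗ[A] C'}
    (hi : Function.Injective i)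
    (e : Function.Exact i p) (hp : Function.Surjective p) (hC : ∀ c : C, ∃ c', f • c' = c) :
    Function.Injective (tmap (f := f) i) ∧ Function.Exact (tmap (f := f) i) (tmap (f := f) p) ∧
      Function.Surjective (tmap (f := f) p) := by
  refine ⟨?_, ?_, ?_⟩
  · intro x y h
    have := congrArg Subtype.val h
    simp only [tmap_apply] at this
    exact Subtype.ext (hi this)
  · intro x
    rw [Subtype.ext_iff]
    simp only [tmap_apply, ZeroMemClass.coe_zero]
    rw [e]
    constructor
    · rintro ⟨c, hc⟩
      refine ⟨⟨c, ?_⟩, Subtype.ext hc⟩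
      rw [Submodule.mem_torsionBy_iff]
      apply hi
      rw [map_smul, hc, map_zero]
      exact x.2
    · rintro ⟨c, rfl⟩
      exact ⟨c, rfl⟩
  · intro c
    obtain ⟨u, hu⟩ := hp c
    have h1 : p (f • u) = 0 := by rw [map_smul, hu]; exact c.2
    obtain ⟨v, hv⟩ := (e _).1 h1
    obtain ⟨w, rfl⟩ := hC v
    refine ⟨⟨u - i w, ?_⟩, ?_⟩
    · rw [Submodule.mem_torsionBy_iff, smul_sub, ← hv, map_smul, sub_self]
    · ext1
      simp [hu, e.apply_apply_eq_zero]

lemma t_inj [Module.Injective A C] : Module.Injective (A ⧸ Ideal.span {f}) (TT f C) := by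
  constructor
  intro X Y _ _ _ _ i hi g
  let : Module A X := Module.compHom X (algebraMap A (A ⧸ Ideal.span {f}))
  let : Module A Y := Module.compHom Y (algebraMap A (A ⧸ Ideal.span {f}))
  have : IsScalarTower A (A ⧸ Ideal.span {f}) X := IsScalarTower.of_algebraMap_smul fun _ _ => rfl
  have : IsScalarTower A (A ⧸ Ideal.span {f}) Y := IsScalarTower.of_algebraMap_smul fun _ _ => rfl
  obtain ⟨h, hh⟩ := Module.Injective.out (i.restrictScalars A) hi (tval g)
  exact ⟨tlift h, fun x => Subtype.ext (hh x)⟩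

lemma inj_div [Module.Injective A C] (hfA : IsSMulRegular A f) (c : C) : ∃ c', f • c' = c := by
  obtain ⟨h, hh⟩ := Module.Injective.out (LinearMap.lsmul A A f) hfA (LinearMap.toSpanSingleton A C c)
  refine ⟨h 1, ?_⟩
  have := hh 1
  simp only [LinearMap.lsmul_apply, LinearMap.map_smul] at this
  simpa using this

lemma inj_pres (C : Type) [AddCommGroup C] [Module A C] :
    ∃ (I C' : ModuleCat.{0} A) (_ : Module.Injective A I) (i : C →ₗ[A] I) (p : I →ₗ[A] C'),
      Function.Injective i ∧ Function.Exact i p ∧ Function.Surjective p := by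
  let I := Injective.under (ModuleCat.of A C)
  let i : C →ₗ[A] I := (Injective.ι (ModuleCat.of A C)).hom
  have hi : Function.Injective i := (ModuleCat.mono_iff_injective _).1 (Injective.ι_mono (ModuleCat.of A C))
  refine ⟨I, ModuleCat.of A (I ⧸ LinearMap.range i), ?_, i, (LinearMap.range i).mkQ, hi, ?_,
    Submodule.mkQ_surjective _⟩
  · have : Injective (ModuleCat.of A I) := Injective.injective_under (ModuleCat.of A C)
    exact Module.injective_module_of_injective_object A I
  · exact LinearMap.exact_map_mkQ_range i

lemma crt (hfA : IsSMulRegular A f) (i : ℕ) :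
    ∀ (C : Type) [AddCommGroup C] [Module A C], (∀ c : C, ∃ c', f • c' = c) →
      (EV A N C (i+1) ↔ EV (A ⧸ Ideal.span {f}) N (TT f C) (i+1)) := by
  induction i with
  | zero =>
    intro C _ _ hC
    obtain ⟨I, C', _, i, p, hi, e, hp⟩ := inj_pres (A := A) C
    obtain ⟨b1, b2, b3⟩ := t_exact (f := f) hi e hp hC
    have : Module.Injective (A ⧸ Ideal.span {f}) (TT f I) := t_inj
    constructor
    · intro h
      refine ev_one_of_lift b1 b2 b3 (ev_inj _) fun φ => ?_
      obtain ⟨ψ, hψ⟩ := lift_of_ev_one hi e hp h (tval φ)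
      exact ⟨tlift ψ, LinearMap.ext fun x => Subtype.ext (LinearMap.congr_fun hψ x)⟩
    · intro h
      refine ev_one_of_lift hi e hp (ev_inj _) fun φ => ?_
      obtain ⟨ψ, hψ⟩ := lift_of_ev_one b1 b2 b3 h (tlift φ)
      exact ⟨tval ψ, LinearMap.ext fun x => congrArg Subtype.val (LinearMap.congr_fun hψ x)⟩
  | succ i ih =>
    intro C _ _ hC
    obtain ⟨I, C', _, i, p, hi, e, hp⟩ := inj_pres (A := A) C
    obtain ⟨b1, b2, b3⟩ := t_exact (f := f) hi e hp hC
    have : Module.Injective (A ⧸ Ideal.span {f}) (TT f I) := t_inj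
    refine (shift_inj hi e hp).trans ((ih C' ?_).trans (shift_inj b1 b2 b3).symm)
    intro c
    obtain ⟨u, rfl⟩ := hp c
    obtain ⟨v, rfl⟩ := inj_div hfA u
    exact ⟨p v, (map_smul _ _ _).symm⟩

/-- dual four term sequence -/
lemma dfour (hfA : IsSMulRegular A f) :
    ∃ (Q W P : ModuleCat.{0} (A ⧸ Ideal.span {f})) (_ : Module.Injective (A ⧸ Ideal.span {f}) P)
      (j : M →ₗ[A ⧸ Ideal.span {f}] P) (p : P →ₗ[A ⧸ Ideal.span {f}] W)
      (t : W →ₗ[A ⧸ Ideal.span {f}] Q) (g : Q →ₗ[A ⧸ Ideal.span {f}] M),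
      Function.Injective t ∧ Function.Exact t g ∧ Function.Surjective g ∧
      Function.Injective j ∧ Function.Exact j p ∧ Function.Surjective p ∧
      ∀ (N : Type) [AddCommGroup N] [Module A N] [Module (A ⧸ Ideal.span {f}) N]
        [IsScalarTower A (A ⧸ Ideal.span {f}) N] (i : ℕ),
        (EV A N M (i+2) ↔ EV (A ⧸ Ideal.span {f}) N Q (i+1)) := by
  obtain ⟨I, C, _, i, p, hi, e, hp⟩ := inj_pres (A := A) M
  have hdivC : ∀ c : C, ∃ c', f • c' = c := by
    intro c
    obtain ⟨u, rfl⟩ := hp c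
    obtain ⟨v, rfl⟩ := inj_div hfA u
    exact ⟨p v, (map_smul _ _ _).symm⟩
  have hM : ∀ m : M, f • m = 0 := fkill (B := A ⧸ Ideal.span {f}) qk
  let p' : TT f I →ₗ[A ⧸ Ideal.span {f}] TT f C := tmap p
  let j : M →ₗ[A ⧸ Ideal.span {f}] TT f I := tlift i
  -- preimage of the torsion
  let E : Submodule A I := (Submodule.torsionBy A C f).comap p
  let pE : E →ₗ[A] TT f C := p.restrict (q := Submodule.torsionBy A C f) (fun x hx => hx)
  have hpE : Function.Surjective pE := by
    intro c
    obtain ⟨u, hu⟩ := hp c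
    have : u ∈ E := by
      change p u ∈ Submodule.torsionBy A C f
      rw [hu]; exact c.2
    exact ⟨⟨u, this⟩, Subtype.ext hu⟩
  have hpEv : ∀ u : E, (pE u : C) = p u := fun _ => rfl
  let iM : M ≃ₗ[A] LinearMap.range i := LinearEquiv.ofInjective i hi
  have hiM : ∀ m, (iM m : I) = i m := fun _ => rfl
  let mu0 : E →ₗ[A] LinearMap.range i := LinearMap.codRestrict _
    (LinearMap.lsmul A I f ∘ₗ E.subtype) (fun u => by
      have h1 : p (f • (u : I)) = 0 := by rw [map_smul]; exact u.2
      exact (e _).1 h1)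
  have hmu0 : ∀ u, (mu0 u : I) = f • (u : I) := fun _ => rfl
  let mu : E →ₗ[A] M := iM.symm.toLinearMap ∘ₗ mu0
  have hmu : ∀ u, i (mu u) = f • (u : I) := by
    intro u
    rw [← hmu0, ← hiM]
    simp [mu]
  obtain ⟨g, hg⟩ := factor pE hpE mu (fun x hx => by
    apply hi
    rw [hmu, map_zero]
    have h1 : p x = 0 := congrArg Subtype.val hx
    obtain ⟨m, hm⟩ := (e _).1 h1
    rw [← hm, ← map_smul, hM, map_zero])
  have hgsurj : Function.Surjective g := by
    intro m
    obtain ⟨u, hu⟩ := inj_div hfA (i m)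
    have hE : u ∈ E := by
      change p u ∈ Submodule.torsionBy A C f
      rw [Submodule.mem_torsionBy_iff, ← map_smul, hu, e.apply_apply_eq_zero]
    refine ⟨pE ⟨u, hE⟩, ?_⟩
    rw [hg]
    apply hi
    rw [hmu, hu]
  have hex : ∀ c, g c = 0 ↔ c ∈ LinearMap.range p' := by
    intro c
    obtain ⟨u, rfl⟩ := hpE c
    rw [hg, ← map_eq_zero_iff i hi, hmu]
    constructor
    · intro h
      exact ⟨⟨u, h⟩, Subtype.ext rfl⟩
    · rintro ⟨v, hv⟩
      have h1 : p v = p u := congrArg Subtype.val hv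
      have h2 : p (u - v) = 0 := by rw [map_sub, h1, sub_self]
      obtain ⟨m, hm⟩ := (e _).1 h2
      have h3 : (u : I) = i m + v := by rw [hm]; abel
      rw [h3, smul_add, ← map_smul, hM, map_zero, zero_add]
      exact v.2
  have hinj : Module.Injective (A ⧸ Ideal.span {f}) (TT f I) := t_inj
  refine ⟨ModuleCat.of _ (TT f C), ModuleCat.of _ (LinearMap.range p'), ModuleCat.of _ (TT f I),
    hinj, j, p'.rangeRestrict, (LinearMap.range p').subtype, g.extendScalarsOfSurjective qs,
    Subtype.val_injective, ?_, hgsurj, ?_, ?_, p'.surjective_rangeRestrict, ?_⟩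
  · intro c
    refine (hex c).trans ?_
    constructor
    · intro h; exact ⟨⟨c, h⟩, rfl⟩
    · rintro ⟨x, rfl⟩; exact x.2
  · intro x y h
    exact hi (congrArg Subtype.val h)
  · intro x
    have : p'.rangeRestrict x = 0 ↔ p x = 0 := by
      rw [Subtype.ext_iff, Subtype.ext_iff]; rfl
    rw [this, e]
    constructor
    · rintro ⟨m, hm⟩; exact ⟨m, Subtype.ext hm⟩
    · rintro ⟨m, rfl⟩; exact ⟨m, rfl⟩
  · intro N _ _ _ _ i
    exact (shift_inj hi e hp).trans (crt hfA i C hdivC)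

/-- id descends -/
lemma step_id (hfA : IsSMulRegular A f) (q n : ℕ)
    (hq : 1 ≤ q) (hn : EV (A ⧸ Ideal.span {f}) M M (2*n)) (h : ∀ i, q ≤ i → EV A N M i) :
    ∀ i, q ≤ i → EV (A ⧸ Ideal.span {f}) N M i := by
  obtain ⟨Q, W, P, _, j, p, t, g, a1, a2, a3, b1, b2, b3, H⟩ := dfour (M := M) hfA
  have hQ : ∀ i, q ≤ i → EV (A ⧸ Ideal.span {f}) N Q i := by
    intro i hi
    obtain ⟨i', rfl⟩ : ∃ i', i = i' + 1 := ⟨i - 1, by omega⟩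
    rw [← H]
    exact h _ (by omega)
  have key : ∀ n, ∃ X : Ext (ModuleCat.of (A ⧸ Ideal.span {f}) M) (ModuleCat.of (A ⧸ Ideal.span {f}) M) (2*n),
      ∀ i, q ≤ i → ∀
      e : Ext (ModuleCat.of (A ⧸ Ideal.span {f}) N) (ModuleCat.of (A ⧸ Ideal.span {f}) M) (i+2*n),
       ∃ e', Ext.comp e' X rfl = e := by
    intro n
    induction n with
    | zero =>
      exact ⟨Ext.mk₀ (𝟙 _), fun i hi e => ⟨e, Ext.comp_mk₀_id e⟩⟩
    | succ n ih =>
      obtain ⟨X, hX⟩ := ih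
      let chi := (se a1 a2 a3).extClass.comp (se b1 b2 b3).extClass (rfl : 1 + 1 = 2)
      refine ⟨chi.comp X (by omega : 2 + 2 * n = 2 * (n+1)), fun i hi e => ?_⟩
      have key2 : ∀ (k : ℕ) (hk : (i + 2) + 2 * n = k)
          (hk2 : i + 2 * (n+1) = k)
          (e : Ext (ModuleCat.of (A ⧸ Ideal.span {f}) N) (ModuleCat.of (A ⧸ Ideal.span {f}) M) k),
          ∃ e', Ext.comp e' (chi.comp X (by omega : 2 + 2 * n = 2 * (n+1))) hk2 = e := by
        intro k hk hk2 e
        subst hk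
        obtain ⟨e1, rfl⟩ := hX (i+2) (by omega) e
        obtain ⟨e2, he2⟩ := Ext.covariant_sequence_exact₁ _ (se b1 b2 b3) e1
          (ev_iff.1 (ev_inj (i+1)) _) (by omega : (i + 1) + 1 = i + 2)
        obtain ⟨e3, he3⟩ := Ext.covariant_sequence_exact₁ _ (se a1 a2 a3) e2
          (ev_iff.1 (hQ _ (by omega)) _) rfl
        refine ⟨e3, ?_⟩
        rw [← he2, ← he3]
        rw [← Ext.comp_assoc e3 chi X (rfl : i + 2 = i + 2) (by omega) (by omega)]
        congr 1
        exact (Ext.comp_assoc _ _ _ _ _ (by omega)).symm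
      exact key2 _ (by omega) rfl e
  have large : ∀ i, q ≤ i → EV (A ⧸ Ideal.span {f}) N M (i+2*n) := by
    intro i hi
    obtain ⟨X, hX⟩ := key n
    rw [ev_iff] at *
    intro e
    obtain ⟨e', rfl⟩ := hX i hi e
    rw [hn X, Ext.comp_zero]
  have desc : ∀ m i, q ≤ i → EV (A ⧸ Ideal.span {f}) N M (i+2*m) → EV (A ⧸ Ideal.span {f}) N M i := by
    intro m
    induction m with
    | zero => intro i _ h; simpa using h
    | succ m ih =>
      intro i hi h
      have h1 : EV (A ⧸ Ideal.span {f}) N M (i+2) := ih (i+2) (by omega) (by convert h using 1; omega)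
      exact cov_right a1 a2 a3 (hQ i hi) (cov_right b1 b2 b3 (ev_inj _) h1)
  intro i hi
  exact desc n i hi (large i hi)

end tors
end S19

open CategoryTheory IsLocalRing

namespace S19
open Abelian RingTheory.Sequence
open scoped Pointwise

lemma ev_equiv {A S : Type} [CommRing A] [CommRing S] [Algebra A S]
    (hb : Function.Bijective (algebraMap A S))
    {N : Type} [AddCommGroup N] [Module S N] [Module A N] [IsScalarTower A S N] (i : ℕ) :
    ∀ (K : Type) [AddCommGroup K] [Module S K] [Module A K] [IsScalarTower A S K],
      (EV A K N (i+1) ↔ EV S K N (i+1)) := by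
  have : Module.Free A S := Module.Free.of_equiv (LinearEquiv.ofBijective (Algebra.linearMap A S) hb)
  induction i with
  | zero =>
    intro K _ _ _ _
    obtain ⟨K', F, _, i, p, hi, e, hp, hr⟩ := pres (A := S) K
    let m1 : Module A K' := Module.compHom K' (algebraMap A S)
    let m2 : Module A F := Module.compHom F (algebraMap A S)
    have t1 : IsScalarTower A S K' := IsScalarTower.of_algebraMap_smul fun _ _ => rfl
    have t2 : IsScalarTower A S F := IsScalarTower.of_algebraMap_smul fun _ _ => rfl
    have : Module.Free A F := Module.Free.trans (S := S)
    constructor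
    · intro h
      refine ev_one_of_ext hi e hp (ev_proj _) fun φ => ?_
      obtain ⟨ψ, hψ⟩ := ext_of_ev_one (f := i.restrictScalars A)
        (g := p.restrictScalars A) hi e hp h (φ.restrictScalars A)
      exact ⟨ψ.extendScalarsOfSurjective hb.2, LinearMap.ext fun x => LinearMap.congr_fun hψ x⟩
    · intro h
      refine ev_one_of_ext (f := i.restrictScalars A)
        (g := p.restrictScalars A) hi e hp (ev_proj _) fun φ => ?_
      obtain ⟨ψ, hψ⟩ := ext_of_ev_one hi e hp h (φ.extendScalarsOfSurjective hb.2)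
      exact ⟨ψ.restrictScalars A, LinearMap.ext fun x => LinearMap.congr_fun hψ x⟩
  | succ i ih =>
    intro K _ _ _ _
    obtain ⟨K', F, _, i, p, hi, e, hp, hr⟩ := pres (A := S) K
    let m1 : Module A K' := Module.compHom K' (algebraMap A S)
    let m2 : Module A F := Module.compHom F (algebraMap A S)
    have t1 : IsScalarTower A S K' := IsScalarTower.of_algebraMap_smul fun _ _ => rfl
    have t2 : IsScalarTower A S F := IsScalarTower.of_algebraMap_smul fun _ _ => rfl
    have : Module.Free A F := Module.Free.trans (S := S)
    exact (shift_proj (f := i.restrictScalars A)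
        (g := p.restrictScalars A) hi e hp).trans ((ih K').trans (shift_proj hi e hp).symm)

lemma wr_cons {A : Type} [CommRing A] {f : A} {fs : List A} (h : IsWeaklyRegular A (f :: fs)) :
    IsSMulRegular A f ∧ IsWeaklyRegular (A ⧸ Ideal.span {f})
      (fs.map (algebraMap A (A ⧸ Ideal.span {f}))) := by
  rw [isWeaklyRegular_cons_iff] at h
  refine ⟨h.1, ?_⟩
  rw [isWeaklyRegular_map_algebraMap_iff]
  have e : (f • (⊤ : Submodule A A)) = Ideal.span {f} := by
    ext x
    rw [Submodule.mem_smul_pointwise_iff_exists, Ideal.mem_span_singleton']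
    simp [mul_comm]
  exact ((Submodule.quotEquivOfEq _ _ e).isWeaklyRegular_congr fs).1 h.2

/-- data for passing to the quotient -/
lemma quot_data {A S : Type} [CommRing A] [CommRing S] [Algebra A S]
    (hs : Function.Surjective (algebraMap A S)) {f : A} {fs : List A}
    (hk : RingHom.ker (algebraMap A S) = Ideal.ofList (f :: fs)) :
    ∃ _ : Algebra (A ⧸ Ideal.span {f}) S, IsScalarTower A (A ⧸ Ideal.span {f}) S ∧
      Function.Surjective (algebraMap (A ⧸ Ideal.span {f}) S) ∧
      RingHom.ker (algebraMap (A ⧸ Ideal.span {f}) S) =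
        Ideal.ofList (fs.map (algebraMap A (A ⧸ Ideal.span {f}))) := by
  have hz : ∀ a ∈ Ideal.span {f}, algebraMap A S a = 0 := by
    intro a ha
    rw [← RingHom.mem_ker, hk, Ideal.ofList_cons]
    exact Ideal.mem_sup_left ha
  let l := Ideal.Quotient.lift (Ideal.span {f}) (algebraMap A S) hz
  refine ⟨l.toAlgebra, ?_, ?_, ?_⟩
  · let := l.toAlgebra
    exact IsScalarTower.of_algebraMap_eq (fun x => rfl)
  · exact Ideal.Quotient.lift_surjective_of_surjective _ hz hs
  · change RingHom.ker (Ideal.Quotient.lift (Ideal.span {f}) (algebraMap A S) hz) = _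
    refine (Ideal.ker_quotient_lift (algebraMap A S) hz).trans ?_
    rw [hk, Ideal.ofList_cons, Ideal.map_sup, Ideal.map_ofList,
      Ideal.map_quotient_self, bot_sup_eq]
    rfl

section chain
variable {S : Type} [CommRing S] {M N : Type} [AddCommGroup M] [Module S M]
  [AddCommGroup N] [Module S N]

lemma chain_base {A : Type} [CommRing A] [Algebra A S] 
    (hs : Function.Surjective (algebraMap A S))
    (hk : RingHom.ker (algebraMap A S) = Ideal.ofList []) : Function.Bijective (algebraMap A S) := by
  refine ⟨?_, hs⟩
  rw [RingHom.injective_iff_ker_eq_bot, hk]; simp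

lemma tower_data {A B : Type} [CommRing A] [CommRing B] [Algebra A S] [Algebra A B] [Algebra B S]
    [IsScalarTower A B S]
    (M : Type) [AddCommGroup M] [Module S M] [Module A M] [IsScalarTower A S M] :
    ∃ _ : Module B M, IsScalarTower A B M ∧ IsScalarTower B S M := by
  let m : Module B M := Module.compHom M (algebraMap B S)
  have : IsScalarTower B S M := IsScalarTower.of_algebraMap_smul fun _ _ => rfl
  refine ⟨m, IsScalarTower.of_algebraMap_smul fun a x => ?_, this⟩
  rw [← algebraMap_smul S (algebraMap A B a) x, ← IsScalarTower.algebraMap_apply, algebraMap_smul]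

lemma chain_up (a m : ℕ) (ha : 1 ≤ a) (h : ∀ i, a ≤ i → i ≤ a + m → EV S M N i) (n : ℕ) :
    ∀ (A : Type) [CommRing A] [Algebra A S] [Module A M] [IsScalarTower A S M]
    [Module A N] [IsScalarTower A S N] (fs : List A) (_ : fs.length = n) (_ : IsWeaklyRegular A fs)
    (_ : Function.Surjective (algebraMap A S))
    (_ : RingHom.ker (algebraMap A S) = Ideal.ofList fs),
    ∀ i, a + n ≤ i → i ≤ a + m → EV A M N i := by
  induction n with
  | zero =>
    intro A _ _ _ _ _ _ fs hl hr hs hk i hi1 hi2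
    obtain rfl := List.length_eq_zero_iff.1 hl
    obtain ⟨j, rfl⟩ : ∃ j, i = j + 1 := ⟨i - 1, by omega⟩
    rw [ev_equiv (chain_base hs hk)]
    exact h _ (by omega) (by omega)
  | succ n ih =>
    intro A _ _ _ _ _ _ fs hl hr hs hk i hi1 hi2
    obtain ⟨f, fs, rfl⟩ := List.exists_cons_of_length_eq_add_one hl
    obtain ⟨_, _, hs', hk'⟩ := quot_data hs hk
    obtain ⟨hf, hr'⟩ := wr_cons hr
    obtain ⟨_, _, _⟩ := tower_data (A := A) (B := A ⧸ Ideal.span {f}) (S := S) M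
    obtain ⟨_, _, _⟩ := tower_data (A := A) (B := A ⧸ Ideal.span {f}) (S := S) N
    have H := ih (A ⧸ Ideal.span {f}) _ (by simpa using hl) hr' hs' hk'
    obtain ⟨j, rfl⟩ : ∃ j, i = j + 2 := ⟨i - 2, by omega⟩
    exact step_up qs qk hf j (H _ (by omega) (by omega)) (H _ (by omega) (by omega))

lemma chain_pd (a m : ℕ) (ha : 1 ≤ a) (h : ∀ i, a ≤ i → i ≤ a + m → EV S M M i) (n : ℕ) (hmn : n ≤ m)
    (q : ℕ) (hq : 1 ≤ q) :
    ∀ (A : Type) [CommRing A] [Algebra A S] [Module A M] [IsScalarTower A S M]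
    [Module A N] [IsScalarTower A S N] (fs : List A) (_ : fs.length = n) (_ : IsWeaklyRegular A fs)
    (_ : Function.Surjective (algebraMap A S))
    (_ : RingHom.ker (algebraMap A S) = Ideal.ofList fs),
    (∀ i, q ≤ i → EV A M N i) → ∀ i, q ≤ i → EV S M N i := by
  induction n with
  | zero =>
    intro A _ _ _ _ _ _ fs hl hr hs hk hA i hi
    obtain rfl := List.length_eq_zero_iff.1 hl
    obtain ⟨j, rfl⟩ : ∃ j, i = j + 1 := ⟨i - 1, by omega⟩
    rw [← ev_equiv (chain_base hs hk)]
    exact hA _ (by omega)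
  | succ n ih =>
    intro A _ _ _ _ _ _ fs hl hr hs hk hA
    obtain ⟨f, fs, rfl⟩ := List.exists_cons_of_length_eq_add_one hl
    obtain ⟨_, _, hs', hk'⟩ := quot_data hs hk
    obtain ⟨hf, hr'⟩ := wr_cons hr
    obtain ⟨_, _, _⟩ := tower_data (A := A) (B := A ⧸ Ideal.span {f}) (S := S) M
    obtain ⟨_, _, _⟩ := tower_data (A := A) (B := A ⧸ Ideal.span {f}) (S := S) N
    have hl' : fs.length = n := by simpa using hl
    have H := chain_up a m ha h n (A ⧸ Ideal.span {f}) _ (by simpa using hl') hr' hs' hk'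
    apply ih (by omega) (A ⧸ Ideal.span {f}) _ (by simpa using hl') hr' hs' hk'
    exact step_pd qs qk hf q ((a + n + 1) / 2) hq (H _ (by omega) (by omega)) hA

lemma chain_id (a m : ℕ) (ha : 1 ≤ a) (h : ∀ i, a ≤ i → i ≤ a + m → EV S M M i) (n : ℕ) (hmn : n ≤ m)
    (q : ℕ) (hq : 1 ≤ q) :
    ∀ (A : Type) [CommRing A] [Algebra A S] [Module A M] [IsScalarTower A S M]
    [Module A N] [IsScalarTower A S N] (fs : List A) (_ : fs.length = n) (_ : IsWeaklyRegular A fs)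
    (_ : Function.Surjective (algebraMap A S))
    (_ : RingHom.ker (algebraMap A S) = Ideal.ofList fs),
    (∀ i, q ≤ i → EV A N M i) → ∀ i, q ≤ i → EV S N M i := by
  induction n with
  | zero =>
    intro A _ _ _ _ _ _ fs hl hr hs hk hA i hi
    obtain rfl := List.length_eq_zero_iff.1 hl
    obtain ⟨j, rfl⟩ : ∃ j, i = j + 1 := ⟨i - 1, by omega⟩
    rw [← ev_equiv (chain_base hs hk)]
    exact hA _ (by omega)
  | succ n ih =>
    intro A _ _ _ _ _ _ fs hl hr hs hk hA
    obtain ⟨f, fs, rfl⟩ := List.exists_cons_of_length_eq_add_one hl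
    obtain ⟨_, _, hs', hk'⟩ := quot_data hs hk
    obtain ⟨hf, hr'⟩ := wr_cons hr
    obtain ⟨_, _, _⟩ := tower_data (A := A) (B := A ⧸ Ideal.span {f}) (S := S) M
    obtain ⟨_, _, _⟩ := tower_data (A := A) (B := A ⧸ Ideal.span {f}) (S := S) N
    have hl' : fs.length = n := by simpa using hl
    have H := chain_up a m ha h n (A ⧸ Ideal.span {f}) _ (by simpa using hl') hr' hs' hk'
    apply ih (by omega) (A ⧸ Ideal.span {f}) _ (by simpa using hl') hr' hs' hk'
    exact step_id hf q ((a + n + 1) / 2) hq (H _ (by omega) (by omega)) hA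

end chain
end S19

open CategoryTheory IsLocalRing

namespace S19
open Abelian RingTheory.Sequence
open scoped Pointwise

section QL
variable {R : Type} [CommRing R]

/-- quotient by a list -/
abbrev QL (xs : List R) (A : Type) [AddCommGroup A] [Module R A] : Type :=
  A ⧸ (Ideal.ofList xs • ⊤ : Submodule R A)

/-- QL of nil -/
noncomputable def qlNil (A : Type) [AddCommGroup A] [Module R A] : QL ([] : List R) A ≃ₗ[R] A :=
  Submodule.quotEquivOfEqBot _ (by simp)

/-- QL of cons -/
noncomputable def qlCons (x : R) (xs : List R) (A : Type) [AddCommGroup A] [Module R A] :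
    QL (x :: xs) A ≃ₗ[R] QL xs (QuotSMulTop x A) :=
  Submodule.quotOfListConsSMulTopEquivQuotSMulTopInner A x xs

lemma ql_nak [IsNoetherianRing R] [IsLocalRing R] {Y : Type} [AddCommGroup Y] [Module R Y]
    [Module.Finite R Y] (xs : List R) (hm : ∀ x ∈ xs, x ∈ maximalIdeal R) :
    ∀ (A : Type) [AddCommGroup A] [Module R A] [Module.Finite R A] (_ : IsWeaklyRegular A xs) (n : ℕ),
    EV R (QL xs A) Y (n + xs.length) → EV R A Y n := by
  induction xs with
  | nil => intro A _ _ _ _ n h; exact (ev_congr_left (qlNil A)).1 h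
  | cons x xs ih =>
    intro A _ _ _ hr n h
    rw [isWeaklyRegular_cons_iff] at hr
    have h1 := (ev_congr_left (qlCons x xs A)).1 h
    refine con_nak (hm x (by simp)) hr.1 (ih (fun y hy => hm y (by simp [hy])) _ hr.2 (n+1) ?_)
    convert h1 using 1
    simp; omega

lemma ql_zero {Y : Type} [AddCommGroup Y] [Module R Y]
    (xs : List R) (hY : ∀ x ∈ xs, ∀ y : Y, x • y = 0) :
    ∀ (A : Type) [AddCommGroup A] [Module R A] (_ : IsWeaklyRegular A xs) (n : ℕ),
    EV R (QL xs A) Y (n + xs.length) → EV R A Y n := by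
  induction xs with
  | nil => intro A _ _ _ n h; exact (ev_congr_left (qlNil A)).1 h
  | cons x xs ih =>
    intro A _ _ hr n h
    rw [isWeaklyRegular_cons_iff] at hr
    have h1 := (ev_congr_left (qlCons x xs A)).1 h
    refine con_zero hr.1 (hY x (by simp)) (ih (fun y hy => hY y (by simp [hy])) _ hr.2 (n+1) ?_)
    convert h1 using 1
    simp; omega

lemma ql_quot {Y : Type} [AddCommGroup Y] [Module R Y] (xs : List R) :
    ∀ (A : Type) [AddCommGroup A] [Module R A] (_ : IsWeaklyRegular A xs) (n : ℕ),
    (∀ j, n ≤ j → j ≤ n + xs.length → EV R A Y j) → EV R (QL xs A) Y (n + xs.length) := by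
  induction xs with
  | nil => intro A _ _ _ n h; exact (ev_congr_left (qlNil A)).2 (h n le_rfl (by simp))
  | cons x xs ih =>
    intro A _ _ hr n h
    rw [isWeaklyRegular_cons_iff] at hr
    rw [ev_congr_left (qlCons x xs A)]
    have := ih _ hr.2 (n+1) (fun j hj1 hj2 => by
      obtain ⟨j, rfl⟩ : ∃ k, j = k + 1 := ⟨j - 1, by omega⟩
      exact con_quot hr.1 (h _ (by omega) (by simp; omega)) (h _ (by omega) (by simp; omega)))
    convert this using 1
    simp; omega

lemma ql_cov {X : Type} [AddCommGroup X] [Module R X]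
    (xs : List R) (hX : ∀ x ∈ xs, ∀ y : X, x • y = 0) :
    ∀ (A : Type) [AddCommGroup A] [Module R A] (_ : IsWeaklyRegular A xs) (n : ℕ),
    EV R X (QL xs A) n → EV R X A n := by
  induction xs with
  | nil => intro A _ _ _ n h; exact (ev_congr_right (qlNil A)).1 h
  | cons x xs ih =>
    intro A _ _ hr n h
    rw [isWeaklyRegular_cons_iff] at hr
    have h1 := (ev_congr_right (qlCons x xs A)).1 h
    exact cov_zero hr.1 (hX x (by simp)) (ih (fun y hy => hX y (by simp [hy])) _ hr.2 n h1)

lemma ql_large {X : Type} [AddCommGroup X] [Module R X] (xs : List R) (q : ℕ) :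
    ∀ (A : Type) [AddCommGroup A] [Module R A] (_ : IsWeaklyRegular A xs),
    (∀ i, q ≤ i → EV R X A i) → ∀ i, q ≤ i → EV R X (QL xs A) i := by
  induction xs with
  | nil => intro A _ _ _ h i hi; exact (ev_congr_right (qlNil A)).2 (h i hi)
  | cons x xs ih =>
    intro A _ _ hr h i hi
    rw [isWeaklyRegular_cons_iff] at hr
    rw [ev_congr_right (qlCons x xs A)]
    exact ih _ hr.2 (fun i hi => cov_quot hr.1 (h _ hi) (h _ (by omega))) i hi

lemma ql_depth {X : Type} [AddCommGroup X] [Module R X]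
    (xs : List R) (hX : ∀ x ∈ xs, ∀ y : X, x • y = 0) :
    ∀ (A : Type) [AddCommGroup A] [Module R A] (_ : IsWeaklyRegular A xs) (n : ℕ),
    n < xs.length → EV R X A n := by
  induction xs with
  | nil => intro A _ _ _ n h; simp at h
  | cons x xs ih =>
    intro A _ _ hr n h
    rw [isWeaklyRegular_cons_iff] at hr
    cases n with
    | zero => exact cov_zero_zero hr.1 (hX x (by simp))
    | succ n =>
      have hh := ih (fun y hy => hX y (by simp [hy])) _ hr.2 n (by simpa using h)
      exact cov_zero_succ hr.1 (hX x (by simp)) hh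

lemma ql_reg [IsNoetherianRing R] [IsLocalRing R] 
    (xs : List R) (hm : ∀ x ∈ xs, x ∈ maximalIdeal R) :
    ∀ (A X : Type) [AddCommGroup A] [Module R A] [Module.Finite R A] [AddCommGroup X] [Module R X]
      [Module.Finite R X] (_ : IsWeaklyRegular A xs) (a0 : A)
      (_ : ∀ a : A, ∃ r : R, a = r • a0) (_ : ∀ z : X, ∃ φ : A →ₗ[R] X, φ a0 = z)
      (_ : ∀ i < xs.length, EV R (QL xs A) X i), IsWeaklyRegular X xs := by
  induction xs with
  | nil => intros; exact IsWeaklyRegular.nil _ _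
  | cons x xs ih =>
    intro A X _ _ _ _ _ _ hr a0 ha hφ h
    have hm' : ∀ y ∈ xs, y ∈ maximalIdeal R := fun y hy => hm y (by simp [hy])
    rw [isWeaklyRegular_cons_iff] at hr
    have h1 : ∀ i < xs.length + 1, EV R (QL xs (QuotSMulTop x A)) X i := fun i hi =>
      (ev_congr_left (qlCons x xs A)).1 (h i (by simpa using hi))
    have h2 : EV R (QuotSMulTop x A) X 0 :=
      ql_nak xs hm' _ hr.2 0 (by simpa using h1 xs.length (by omega))
    rw [ev_zero_iff] at h2
    have hx : IsSMulRegular X x := by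
      rw [isSMulRegular_iff_right_eq_zero_of_smul]
      intro z hz
      obtain ⟨φ, rfl⟩ := hφ z
      obtain ⟨ψ, hψ⟩ := factor (Submodule.mkQ (x • (⊤ : Submodule R A))) (Submodule.mkQ_surjective _) φ
        (fun u hu => by
          rw [Submodule.mkQ_apply, Submodule.Quotient.mk_eq_zero,
            Submodule.mem_smul_pointwise_iff_exists] at hu
          obtain ⟨v, _, rfl⟩ := hu
          obtain ⟨r, rfl⟩ := ha v
          rw [map_smul, map_smul, smul_comm, hz, smul_zero])
      rw [← hψ, h2 ψ]; rfl
    rw [isWeaklyRegular_cons_iff]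
    refine ⟨hx, ih hm' (QuotSMulTop x A) (QuotSMulTop x X) hr.2 (Submodule.Quotient.mk a0) ?_ ?_ ?_⟩
    · intro a
      obtain ⟨a, rfl⟩ := Submodule.Quotient.mk_surjective _ a
      obtain ⟨r, rfl⟩ := ha a
      exact ⟨r, rfl⟩
    · intro z
      obtain ⟨z, rfl⟩ := Submodule.Quotient.mk_surjective _ z
      obtain ⟨φ, rfl⟩ := hφ z
      exact ⟨QuotSMulTop.map x φ, rfl⟩
    · intro i hi
      exact cov_quot hx (h1 i (by omega)) (h1 (i+1) (by omega))

lemma mem_cons {L : Type} [AddCommGroup L] [Module R L] (x : R) (xs : List R) (u : L) :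
    u ∈ (Ideal.ofList (x :: xs) • ⊤ : Submodule R L) ↔
      (Submodule.Quotient.mk u : QuotSMulTop x L) ∈ (Ideal.ofList xs • ⊤ : Submodule R (QuotSMulTop x L)) := by
  have h : (Ideal.ofList xs • ⊤ : Submodule R (QuotSMulTop x L)) =
      (Ideal.ofList xs • ⊤ : Submodule R L).map (Submodule.mkQ (x • (⊤ : Submodule R L))) := by
    rw [Submodule.map_smul'', Submodule.map_top, Submodule.range_mkQ]
  rw [h, ← Submodule.mkQ_apply, ← Submodule.mem_comap, Submodule.comap_map_mkQ,
    Ideal.ofList_cons_smul]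

lemma ql_tor (xs : List R) :
    ∀ (L F X : Type) [AddCommGroup L] [Module R L] [AddCommGroup F] [Module R F]
      [AddCommGroup X] [Module R X] (i : L →ₗ[R] F) (p : F →ₗ[R] X)
      (_ : Function.Injective i) (_ : Function.Exact i p) (_ : Function.Surjective p)
      (_ : IsWeaklyRegular X xs) (u : L), i u ∈ (Ideal.ofList xs • ⊤ : Submodule R F) →
      u ∈ (Ideal.ofList xs • ⊤ : Submodule R L) := by
  induction xs with
  | nil =>
    intro L F X _ _ _ _ _ _ i p hi e hp hr u hu
    simp at hu
    have : u = 0 := hi (by rw [hu, map_zero])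
    rw [this]; exact zero_mem _
  | cons x xs ih =>
    intro L F X _ _ _ _ _ _ i p hi e hp hr u hu
    rw [isWeaklyRegular_cons_iff] at hr
    rw [mem_cons] at hu ⊢
    refine ih _ _ _ (QuotSMulTop.map x i) (QuotSMulTop.map x p) ?_ (QuotSMulTop.map_exact x e hp)
      (QuotSMulTop.map_surjective x hp) hr.2 _ hu
    rw [injective_iff_map_eq_zero]
    intro z hz
    obtain ⟨v, rfl⟩ := Submodule.Quotient.mk_surjective _ z
    rw [QuotSMulTop.map_apply_mk, Submodule.Quotient.mk_eq_zero,
      Submodule.mem_smul_pointwise_iff_exists] at hz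
    obtain ⟨w, _, hw⟩ := hz
    have : p w = 0 := by
      apply hr.1
      simp only [smul_zero]
      rw [← map_smul, hw, e.apply_apply_eq_zero]
    obtain ⟨v', rfl⟩ := (e w).1 this
    rw [Submodule.Quotient.mk_eq_zero, Submodule.mem_smul_pointwise_iff_exists]
    exact ⟨v', trivial, hi (by rw [map_smul, hw])⟩

end QL
end S19

open CategoryTheory IsLocalRing

namespace S19
open Abelian RingTheory.Sequence
open scoped Pointwise

section loc
variable {R : Type} [CommRing R] [IsNoetherianRing R] [IsLocalRing R]

lemma ofList_le (xs : List R) (hm : ∀ x ∈ xs, x ∈ maximalIdeal R) : Ideal.ofList xs ≤ maximalIdeal R := by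
  rw [Ideal.ofList, Ideal.span_le]; exact hm

lemma vseq (xs : List R) (hm : ∀ x ∈ xs, x ∈ maximalIdeal R)
    (hq : maximalIdeal R ^ 2 = Ideal.ofList xs * maximalIdeal R) :
    ∃ (V : ModuleCat.{0} R) (_ : Module.Finite R V) (i : V →ₗ[R] QL xs R)
      (p : QL xs R →ₗ[R] R ⧸ maximalIdeal R), Function.Injective i ∧ Function.Exact i p ∧
      Function.Surjective p ∧ ∀ x ∈ maximalIdeal R, ∀ v : V, x • v = 0 := by
  have hle := ofList_le xs hm
  let p : QL xs R →ₗ[R] R ⧸ maximalIdeal R :=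
    Submodule.mapQ (Ideal.ofList xs • ⊤ : Submodule R R) (maximalIdeal R) LinearMap.id
      (by simpa using hle)
  refine ⟨ModuleCat.of R (LinearMap.ker p), ?_, (LinearMap.ker p).subtype, p, Subtype.val_injective,
    LinearMap.exact_subtype_ker_map p, ?_, ?_⟩
  · change Module.Finite R (LinearMap.ker p); infer_instance
  · intro z
    obtain ⟨r, rfl⟩ := Submodule.Quotient.mk_surjective _ z
    exact ⟨Submodule.Quotient.mk r, rfl⟩
  · rintro x hx ⟨v, hv⟩
    apply Subtype.ext
    change x • v = 0
    obtain ⟨r, rfl⟩ := Submodule.Quotient.mk_surjective _ v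
    have hr : r ∈ maximalIdeal R := (Submodule.Quotient.mk_eq_zero (maximalIdeal R)).1 hv
    rw [← Submodule.Quotient.mk_smul, Submodule.Quotient.mk_eq_zero]
    have : x * r ∈ maximalIdeal R ^ 2 := by rw [pow_two]; exact Ideal.mul_mem_mul hx hr
    rw [hq] at this
    have h5 : x * r ∈ Ideal.ofList xs := Ideal.mul_le_left this
    simpa using h5

lemma b0_zero {Y : Type} [AddCommGroup Y] [Module R Y] (xs : List R) (hr : IsWeaklyRegular R xs)
    (i : ℕ) (hi : xs.length + 1 ≤ i) : EV R (QL xs R) Y i := by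
  obtain ⟨j, rfl⟩ : ∃ j, i = (j + 1) + xs.length := ⟨i - 1 - xs.length, by omega⟩
  refine ql_quot xs R hr (j+1) (fun l hl _ => ?_)
  obtain ⟨l, rfl⟩ : ∃ k, l = k + 1 := ⟨l - 1, by omega⟩
  exact ev_proj l

section mm
variable {xs : List R} (hm : ∀ x ∈ xs, x ∈ maximalIdeal R) (hr : IsWeaklyRegular R xs)
    (hq : maximalIdeal R ^ 2 = Ideal.ofList xs * maximalIdeal R)
include hm hr hq

lemma k1 {Y : Type} [AddCommGroup Y] [Module R Y] (i : ℕ) (hi : xs.length + 1 ≤ i)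
    (h : EV R (R ⧸ maximalIdeal R) Y i) : EV R (R ⧸ maximalIdeal R) Y (i+1) := by
  obtain ⟨V, _, f, p, hf, e, hp, hV⟩ := vseq xs hm hq
  exact con_right hf e hp (b0_zero xs hr _ (by omega)) (ev_v_left hV h)

lemma k1' {Y : Type} [AddCommGroup Y] [Module R Y] 
    (h : EV R (R ⧸ maximalIdeal R) Y (xs.length + 1)) (i : ℕ) (hi : xs.length + 1 ≤ i) :
    EV R (R ⧸ maximalIdeal R) Y i := by
  induction i, hi using Nat.le_induction with
  | base => exact h
  | succ n hn ih => exact k1 hm hr hq n hn ih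

lemma k2 {Y : Type} [AddCommGroup Y] [Module R Y] (i : ℕ) (hi : xs.length + 1 ≤ i)
    (h : EV R (R ⧸ maximalIdeal R) Y (i+1)) : EV R (R ⧸ maximalIdeal R) Y i := by
  obtain ⟨V, _, f, p, hf, e, hp, hV⟩ := vseq xs hm hq
  cases subsingleton_or_nontrivial V with
  | inl h0 =>
    obtain ⟨j, rfl⟩ : ∃ j, i = j + 1 := ⟨i - 1, by omega⟩
    exact con_right hf e hp (b0_zero xs hr _ (by omega)) (ev_sub_left _)
  | inr h0 =>
    exact ev_of_v_left hV (con_left hf e hp (b0_zero xs hr _ hi) h)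

lemma k2' {Y : Type} [AddCommGroup Y] [Module R Y] (q : ℕ)
    (h : ∀ i, q ≤ i → EV R (R ⧸ maximalIdeal R) Y i) (i : ℕ) (hi : xs.length + 1 ≤ i) :
    EV R (R ⧸ maximalIdeal R) Y i := by
  have : ∀ n i, xs.length + 1 ≤ i → q ≤ i + n → EV R (R ⧸ maximalIdeal R) Y i := by
    intro n
    induction n with
    | zero => intro i _ h2; exact h i h2
    | succ n ih => intro i h1 h2; exact k2 hm hr hq i h1 (ih (i+1) (by omega) (by omega))
  exact this q i hi (by omega)

lemma mcm_wr {X : Type} [AddCommGroup X] [Module R X] [Module.Finite R X]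
    (h : ∀ i < xs.length, EV R (R ⧸ maximalIdeal R) X i) : IsWeaklyRegular X xs := by
  obtain ⟨V, _, f, p, hf, e, hp, hV⟩ := vseq xs hm hq
  refine ql_reg xs hm R X hr 1 (fun a => ⟨a, by simp⟩) (fun z => ⟨LinearMap.toSpanSingleton R X z, by simp⟩) ?_
  exact fun i hi => con_mid hf e hp (ev_v_left hV (h i hi)) (h i hi)

end mm

lemma min_cover (X : Type) [AddCommGroup X] [Module R X] [Module.Finite R X] :
    ∃ (r : ℕ) (L : ModuleCat.{0} R) (_ : Module.Finite R L) (i : L →ₗ[R] (Fin r → R))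
      (p : (Fin r → R) →ₗ[R] X), Function.Injective i ∧ Function.Exact i p ∧ Function.Surjective p ∧
      ∀ u j, i u j ∈ maximalIdeal R := by
  let k := ResidueField R
  let b := Module.finBasis k (TensorProduct R k X)
  have hsurj : Function.Surjective (TensorProduct.mk R k X 1) :=
    TensorProduct.mk_surjective R X k Ideal.Quotient.mk_surjective
  choose f hf using fun j => hsurj (b j)
  have hspan := IsLocalRing.span_eq_top_of_tmul_eq_basis f b hf
  let p : (Fin _ → R) →ₗ[R] X := Fintype.linearCombination R f
  refine ⟨_, ModuleCat.of R (LinearMap.ker p), ?_, (LinearMap.ker p).subtype, p,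
    Subtype.val_injective, LinearMap.exact_subtype_ker_map p, ?_, ?_⟩
  · change Module.Finite R (LinearMap.ker p); infer_instance
  · rw [← LinearMap.range_eq_top, Fintype.range_linearCombination, hspan]
  · rintro ⟨u, hu⟩ j
    change u j ∈ _
    have h1 : p u = 0 := hu
    have h2 : ∑ l, (algebraMap R k (u l)) • b l = 0 := by
      have := congrArg (TensorProduct.mk R k X 1) h1
      rw [map_zero, Fintype.linearCombination_apply, map_sum] at this
      rw [← this]
      refine Finset.sum_congr rfl fun l _ => ?_
      rw [map_smul, hf, algebraMap_smul]
    have h3 := (Fintype.linearIndependent_iff.1 b.linearIndependent) _ h2 j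
    exact (residue_eq_zero_iff _).1 h3

end loc
end S19

open CategoryTheory IsLocalRing

namespace S19
open Abelian RingTheory.Sequence
open scoped Pointwise

section loc
variable {R : Type} [CommRing R] [IsNoetherianRing R] [IsLocalRing R]

lemma inv_zero {X A B : Type} [AddCommGroup X] [Module R X] [AddCommGroup A] [Module R A]
    [AddCommGroup B] [Module R B] (f : A →ₗ[R] B) (hf : Function.Injective f) (h : EV R X B 0) :
    EV R X A 0 := by
  rw [ev_zero_iff] at *
  intro g
  ext x
  apply hf
  have := LinearMap.congr_fun (h (f ∘ₗ g)) x
  simpa using this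

variable {xs : List R} (hm : ∀ x ∈ xs, x ∈ maximalIdeal R) (hr : IsWeaklyRegular R xs)
include hm hr

lemma k_free (r : ℕ) (i : ℕ) (hi : i < xs.length) : EV R (R ⧸ maximalIdeal R) (Fin r → R) i := by
  apply ev_pi_right
  refine ql_depth xs ?_ R hr i hi
  intro x hx y
  obtain ⟨y, rfl⟩ := Submodule.Quotient.mk_surjective _ y
  rw [← Submodule.Quotient.mk_smul, Submodule.Quotient.mk_eq_zero]
  exact Ideal.mul_mem_right _ _ (hm x hx)

lemma syz_dep {L M : Type} [AddCommGroup L] [Module R L] [AddCommGroup M] [Module R M] {r : ℕ}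
    (f : L →ₗ[R] (Fin r → R)) (p : (Fin r → R) →ₗ[R] M) (hf : Function.Injective f)
    (e : Function.Exact f p) (hp : Function.Surjective p) (t : ℕ)
    (h : ∀ i < t, EV R (R ⧸ maximalIdeal R) M i) (i : ℕ) (h1 : i < t + 1) (h2 : i < xs.length) :
    EV R (R ⧸ maximalIdeal R) L i := by
  cases i with
  | zero => exact inv_zero f hf (k_free hm hr r 0 h2)
  | succ i => exact cov_left hf e hp (k_free hm hr r _ h2) (h i (by omega))

lemma syz_n (n : ℕ) : ∀ (t : ℕ) (M : Type) [AddCommGroup M] [Module R M] [Module.Finite R M]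
    (_ : ∀ i < t, EV R (R ⧸ maximalIdeal R) M i) (_ : xs.length ≤ t + n),
    ∃ (X : ModuleCat.{0} R) (_ : Module.Finite R X),
      (∀ (N : ModuleCat.{0} R) (i : ℕ), EV R M N (i + n + 1) ↔ EV R X N (i + 1)) ∧
      (∀ i < xs.length, EV R (R ⧸ maximalIdeal R) X i) ∧
      ((∃ q, ∀ i, q ≤ i → EV R (R ⧸ maximalIdeal R) M i ∧ EV R (R ⧸ maximalIdeal R) R i) →
        ∃ q, ∀ i, q ≤ i → EV R (R ⧸ maximalIdeal R) X i) := by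
  induction n with
  | zero =>
    intro t M _ _ _ h ht
    refine ⟨ModuleCat.of R M, ‹_›, fun N i => Iff.rfl, fun i hi => h i (by omega), ?_⟩
    rintro ⟨q, hq⟩
    exact ⟨q, fun i hi => (hq i hi).1⟩
  | succ n ih =>
    intro t M _ _ _ h ht
    obtain ⟨r, L, _, f, p, hf, e, hp, -⟩ := min_cover (R := R) M
    obtain ⟨X, hX, h1, h2, h3⟩ := ih (min (t+1) xs.length) L
      (fun i hi => syz_dep hm hr f p hf e hp t h i (by omega) (by omega)) (by omega)
    refine ⟨X, hX, fun N i => ?_, h2, ?_⟩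
    · rw [← h1 N i]
      exact shift_proj hf e hp
    · rintro ⟨q, hq⟩
      refine h3 ⟨q+1, fun i hi => ⟨?_, (hq i (by omega)).2⟩⟩
      obtain ⟨j, rfl⟩ : ∃ j, i = j + 1 := ⟨i - 1, by omega⟩
      exact cov_left hf e hp (ev_pi_right (hq _ (by omega)).2 r) (hq j (by omega)).1

variable (hq : maximalIdeal R ^ 2 = Ideal.ofList xs * maximalIdeal R)
include hq

lemma lemA (n t : ℕ) (M : Type) [AddCommGroup M] [Module R M] [Module.Finite R M]
    (h : ∀ i < t, EV R (R ⧸ maximalIdeal R) M i) (ht : xs.length ≤ t + n) :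
    ∃ (L : ModuleCat.{0} R) (_ : Module.Finite R L),
      (∀ (N : ModuleCat.{0} R) (i : ℕ), EV R M N (i + n + 2) ↔ EV R L N (i + 1)) ∧
      IsWeaklyRegular L xs ∧ (∀ x ∈ maximalIdeal R, ∀ u : QL xs L, x • u = 0) ∧ 
      ((∃ q, ∀ i, q ≤ i → EV R (R ⧸ maximalIdeal R) M i ∧ EV R (R ⧸ maximalIdeal R) R i) →
        ∃ q, ∀ i, q ≤ i → EV R (R ⧸ maximalIdeal R) L i) := by
  obtain ⟨X, _, h1, h2, h3⟩ := syz_n hm hr n t M h ht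
  obtain ⟨r, L, hL, f, p, hf, e, hp, hu⟩ := min_cover (R := R) X
  refine ⟨L, hL, fun N i => ?_, ?_, ?_, ?_⟩
  · have := h1 N (i+1)
    rw [show i + 1 + n + 1 = i + n + 2 by ring] at this
    rw [this]
    exact shift_proj hf e hp
  · exact mcm_wr hm hr hq (fun i hi => syz_dep hm hr f p hf e hp xs.length h2 i (by omega) hi)
  · intro x hx u
    obtain ⟨u, rfl⟩ := Submodule.Quotient.mk_surjective _ u
    rw [← Submodule.Quotient.mk_smul, Submodule.Quotient.mk_eq_zero]
    refine ql_tor xs L _ X f p hf e hp (mcm_wr hm hr hq h2) _ ?_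
    have hmem : ∀ j, x * f u j ∈ Ideal.ofList xs := by
      intro j
      have : x * f u j ∈ maximalIdeal R ^ 2 := by rw [pow_two]; exact Ideal.mul_mem_mul hx (hu u j)
      rw [hq] at this
      exact Ideal.mul_le_left this
    rw [pi_eq_sum_univ (f (x • u))]
    refine Submodule.sum_mem _ fun j _ => ?_
    refine Submodule.smul_mem_smul ?_ trivial
    rw [map_smul]
    exact hmem j
  · rintro ⟨q, hq'⟩
    obtain ⟨q2, hq2⟩ := h3 ⟨q, hq'⟩
    refine ⟨q + q2 + 1, fun i hi => ?_⟩
    obtain ⟨j, rfl⟩ : ∃ j, i = j + 1 := ⟨i - 1, by omega⟩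
    exact cov_left hf e hp (ev_pi_right (hq' _ (by omega)).2 r) (hq2 j (by omega))

omit hr hq hm in
lemma ql_nontriv (hm : ∀ x ∈ xs, x ∈ maximalIdeal R) (L : Type) [AddCommGroup L] [Module R L] [Module.Finite R L] [Nontrivial L] :
    Nontrivial (QL xs L) := by
  rw [Submodule.Quotient.nontrivial_iff]
  refine (Submodule.top_ne_ideal_smul_of_le_jacobson_annihilator ?_).symm
  exact (ofList_le xs hm).trans (maximalIdeal_le_jacobson _)

lemma lemB {L N : Type} [AddCommGroup L] [Module R L] [Module.Finite R L] [Nontrivial L]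
    [AddCommGroup N] [Module R N] (hw : IsWeaklyRegular L xs)
    (hk : ∀ x ∈ maximalIdeal R, ∀ u : QL xs L, x • u = 0)
    (h : ∀ i, i ≤ xs.length → EV R L N (i+1)) (i : ℕ) (hi : xs.length + 1 ≤ i) :
    EV R (R ⧸ maximalIdeal R) N i := by
  refine k1' hm hr hq ?_ i hi
  have := ql_nontriv hm L
  refine ev_of_v_left hk ?_
  rw [add_comm]
  refine ql_quot xs L hw 1 (fun j h1 h2 => ?_)
  obtain ⟨j, rfl⟩ : ∃ k, j = k + 1 := ⟨j - 1, by omega⟩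
  exact h j (by omega)

lemma lemE {L : Type} [AddCommGroup L] [Module R L] [Module.Finite R L]
    (hw : IsWeaklyRegular L xs)
    (hk : ∀ x ∈ maximalIdeal R, ∀ u : QL xs L, x • u = 0)
    (h : ∀ i, xs.length + 1 ≤ i → EV R (R ⧸ maximalIdeal R) (R ⧸ maximalIdeal R) i) 
    (N : Type) [AddCommGroup N] [Module R N] (i : ℕ) : EV R L N (i+1) := by
  have hkk : ∀ x ∈ maximalIdeal R, ∀ y : R ⧸ maximalIdeal R, x • y = 0 := by
    intro x hx y
    obtain ⟨y, rfl⟩ := Submodule.Quotient.mk_surjective _ y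
    rw [← Submodule.Quotient.mk_smul, Submodule.Quotient.mk_eq_zero]
    exact Ideal.mul_mem_right _ _ hx
  have h1 : EV R L (R ⧸ maximalIdeal R) 1 := by
    refine ql_zero xs (fun x hx => hkk x (hm x hx)) L hw 1 ?_
    exact ev_v_left hk (h _ (by omega))
  obtain ⟨r, K, hK, f, p, hf, e, hp, hu⟩ := min_cover (R := R) L
  have h2 : ∀ φ : K →ₗ[R] (R ⧸ maximalIdeal R), φ = 0 := by
    intro φ
    obtain ⟨ψ, rfl⟩ := ext_of_ev_one hf e hp h1 φ
    ext u
    rw [LinearMap.comp_apply, pi_eq_sum_univ (f u), map_sum]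
    refine Finset.sum_eq_zero fun j _ => ?_
    rw [map_smul]
    exact hkk _ (hu u j) _
  have hs : Subsingleton K := by
    by_contra hns
    have : Nontrivial K := not_subsingleton_iff_nontrivial.1 hns
    have h3 : Nontrivial (K ⧸ (maximalIdeal R • ⊤ : Submodule R K)) := by
      rw [Submodule.Quotient.nontrivial_iff]
      exact (Submodule.top_ne_ideal_smul_of_le_jacobson_annihilator (maximalIdeal_le_jacobson _)).symm
    have hk3 : ∀ x ∈ maximalIdeal R, ∀ y : (K ⧸ (maximalIdeal R • ⊤ : Submodule R K)), x • y = 0 := by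
      intro x hx y
      obtain ⟨y, rfl⟩ := Submodule.Quotient.mk_surjective _ y
      rw [← Submodule.Quotient.mk_smul, Submodule.Quotient.mk_eq_zero]
      exact Submodule.smul_mem_smul hx trivial
    have h4 : EV R K (R ⧸ maximalIdeal R) 0 := ev_zero_iff.2 h2
    have h5 := ev_v_right hk3 h4
    have h6 := ev_zero_iff.1 h5 (Submodule.mkQ _)
    obtain ⟨y, hy⟩ := exists_ne (0 : (K ⧸ (maximalIdeal R • ⊤ : Submodule R K)))
    obtain ⟨y, rfl⟩ := Submodule.Quotient.mk_surjective _ y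
    exact hy (LinearMap.congr_fun h6 y)
  have hinj : Function.Injective p := by
    rw [injective_iff_map_eq_zero]
    intro a ha
    obtain ⟨u, rfl⟩ := (e a).1 ha
    rw [Subsingleton.elim u 0, map_zero]
  exact (ev_congr_left (LinearEquiv.ofBijective p ⟨hinj, hp⟩)).1 (ev_proj i)

end loc
end S19

open CategoryTheory IsLocalRing

namespace S19
open Abelian RingTheory.Sequence
open scoped Pointwise

lemma cosyz {R : Type} [CommRing R] (n : ℕ) : ∀ (Y : Type) [AddCommGroup Y] [Module R Y]
    (_ : ∀ (I : Ideal R) (i : ℕ), n ≤ i → EV R (R ⧸ I) Y (i+1)) (N : Type) [AddCommGroup N] [Module R N]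
    (i : ℕ), n ≤ i → EV R N Y (i+1) := by
  induction n with
  | zero =>
    intro Y _ _ h N _ _ i _
    have hb : Module.Baer R Y := by
      intro I g
      obtain ⟨ψ, hψ⟩ := ext_of_ev_one (f := I.subtype) (g := Submodule.mkQ I)
        Subtype.val_injective (LinearMap.exact_subtype_mkQ I) (Submodule.mkQ_surjective _)
        (h I 0 le_rfl) g
      exact ⟨ψ, fun x hx => LinearMap.congr_fun hψ ⟨x, hx⟩⟩
    have := hb.injective
    exact ev_inj i
  | succ n ih =>
    intro Y _ _ h N _ _ i hi
    obtain ⟨I, C, _, f, p, hf, e, hp⟩ := inj_pres (A := R) Y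
    obtain ⟨j, rfl⟩ : ∃ j, i = j + 1 := ⟨i - 1, by omega⟩
    rw [show j + 1 + 1 = j + 2 from rfl, shift_inj hf e hp]
    refine ih C (fun J l hl => ?_) N j (by omega)
    rw [← shift_inj hf e hp]
    exact h J (l+1) (by omega)

section loc
variable {R : Type} [CommRing R] [IsNoetherianRing R] [IsLocalRing R]
variable {xs : List R} (hm : ∀ x ∈ xs, x ∈ maximalIdeal R) (hr : IsWeaklyRegular R xs)
   (hq : maximalIdeal R ^ 2 = Ideal.ofList xs * maximalIdeal R)
include hm hr hq

lemma lemD (Y : Type) [AddCommGroup Y] [Module R Y] [Module.Finite R Y] (j : ℕ)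
    (h : ∀ i, j ≤ i → EV R (R ⧸ maximalIdeal R) Y i) :
    ∃ q, 1 ≤ q ∧ ∀ (N : Type) [AddCommGroup N] [Module R N] (i : ℕ), q ≤ i → EV R N Y i := by
  refine ⟨j + xs.length + 2, by omega, ?_⟩
  intro N _ _ i hi
  obtain ⟨l, rfl⟩ : ∃ l, i = l + 1 := ⟨i - 1, by omega⟩
  refine cosyz (j + xs.length + 1) Y (fun I i hi => ?_) N l (by omega)
  obtain ⟨L, _, h1, h2, h3, -⟩ := lemA hm hr hq xs.length 0 (R ⧸ I) (by simp) (by omega)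
  obtain ⟨l, rfl⟩ : ∃ l, i = l + xs.length + 1 := ⟨i - 1 - xs.length, by omega⟩
  refine (h1 (ModuleCat.of R Y) l).2 ?_
  exact ql_nak xs hm L h2 (l+1) (ev_v_left h3 (h _ (by omega)))

end loc

/-- projectivity from Ext vanishing -/
lemma free_of {S : Type} [CommRing S] [IsNoetherianRing S] [IsLocalRing S] (M : Type) [AddCommGroup M] [Module S M]
    [Module.Finite S M] (q : ℕ) (h : ∀ (N : ModuleCat.{0} S) (i : ℕ), q ≤ i → EV S M N (i+1))
    (hS : ∀ i, i < q → EV S M S (i+1)) : Module.Free S M := by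
  have hS' : ∀ i, EV S M S (i+1) := fun i => by
    by_cases hi : i < q
    · exact hS i hi
    · exact h (ModuleCat.of S S) i (by omega)
  have key : ∀ n, ∀ (N : ModuleCat.{0} S) (_ : Module.Finite S N) (i : ℕ), q ≤ i + n → EV S M N (i+1) := by
    intro n
    induction n with
    | zero => intro N _ i hi; exact h N i hi
    | succ n ih =>
      intro N _ i hi
      obtain ⟨r, L, hL, f, p, hf, e, hp, -⟩ := min_cover (R := S) N
      exact cov_right hf e hp (ev_pi_right (hS' i) r) (ih L hL (i+1) (by omega))
  obtain ⟨r, L, hL, f, p, hf, e, hp, -⟩ := min_cover (R := S) M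
  obtain ⟨ψ, hψ⟩ := lift_of_ev_one hf e hp (key q L hL 0 (by omega)) LinearMap.id
  have : Module.Projective S M := Module.Projective.of_split ψ p hψ
  exact Module.free_of_flat_of_isLocalRing

lemma depth_lift (S : Type) [CommRing S] [IsLocalRing S] (M : Type) [AddCommGroup M] [Module S M] (t : ℕ)
    (ht : depth S M = (t : ℕ∞)) : ∃ ys : List S, (∀ x ∈ ys, x ∈ maximalIdeal S) ∧
      IsWeaklyRegular M ys ∧ t ≤ ys.length := by
  cases t with
  | zero => exact ⟨[], by simp, IsWeaklyRegular.nil _ _, by simp⟩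
  | succ t =>
    have : ((t : ℕ∞)) < depth S M := by rw [ht]; exact_mod_cast Nat.lt_succ_self t
    unfold depth at this
    obtain ⟨n, ⟨ys, h1, h2, h3⟩, hlt⟩ := lt_sSup_iff.1 this
    refine ⟨ys, h1, h2.1, ?_⟩
    rw [← h3] at hlt
    exact_mod_cast hlt

end S19

open CategoryTheory IsLocalRing

namespace S19
open Abelian RingTheory.Sequence
open scoped Pointwise

section fin
variable (R : Type) [CommRing R] [IsNoetherianRing R] [IsLocalRing R]

lemma dim_bound (fs : List R) (hmem : ∀ x ∈ fs, x ∈ maximalIdeal R) (d dS : ℕ)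
    (hdim : ringKrullDim R = (d : WithBot ℕ∞))
    (hdS : ringKrullDim (R ⧸ Ideal.ofList fs) = (dS : WithBot ℕ∞)) : d ≤ dS + fs.length := by
  classical
  have hs : ((fs.toFinset : Finset R) : Set R) = {r | r ∈ fs} := by ext; simp
  have h := ringKrullDim_le_ringKrullDim_quotient_add_card fs.toFinset
    (by rw [hs, IsLocalRing.ringJacobson_eq_maximalIdeal]; exact hmem)
  rw [hs, hdim] at h
  change _ ≤ ringKrullDim (R ⧸ Ideal.ofList fs) + _ at h
  rw [hdS] at h
  have h2 : d ≤ dS + fs.toFinset.card := by exact_mod_cast h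
  have := List.toFinset_card_le fs
  omega

lemma depth_k (fs : List R)
    [IsLocalRing (R ⧸ Ideal.ofList fs)]
    (M : Type) [AddCommGroup M] [Module (R ⧸ Ideal.ofList fs) M] [Module R M]
    [IsScalarTower R (R ⧸ Ideal.ofList fs) M] (t : ℕ)
    (ht : depth (R ⧸ Ideal.ofList fs) M = (t : ℕ∞)) (i : ℕ) (hi : i < t) :
    EV R (R ⧸ maximalIdeal R) M i := by
  obtain ⟨ys, h1, h2, h3⟩ := depth_lift _ M t ht
  obtain ⟨zs, rfl⟩ := (List.map_surjective_iff.2 (Ideal.Quotient.mk_surjective (I := Ideal.ofList fs))) ys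
  have h4 : IsWeaklyRegular M zs := (isWeaklyRegular_map_algebraMap_iff (R ⧸ Ideal.ofList fs) M zs).1 h2
  refine ql_depth zs ?_ M h4 i (by simpa using lt_of_lt_of_le hi h3)
  intro x hx y
  have hxm : x ∈ maximalIdeal R := by
    have := h1 (Ideal.Quotient.mk _ x) (List.mem_map_of_mem hx)
    rw [mem_maximalIdeal, mem_nonunits_iff] at this ⊢
    exact fun hu => this (hu.map _)
  obtain ⟨y, rfl⟩ := Submodule.Quotient.mk_surjective _ y
  rw [← Submodule.Quotient.mk_smul, Submodule.Quotient.mk_eq_zero]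
  exact Ideal.mul_mem_right _ _ hxm

end fin
end S19

open S19 RingTheory.Sequence in
theorem statement19 (R : Type) [CommRing R] [IsNoetherianRing R] [IsLocalRing R]
    (d : ℕ) (hdim : ringKrullDim R = (d : WithBot ℕ∞)) (hCM : depth R R = (d : ℕ∞))
    (hmin : HasMinimalMultiplicity R d)
    (c : ℕ) (fs : List R) (hlen : fs.length = c) (hmem : ∀ x ∈ fs, x ∈ maximalIdeal R)
    (hreg : RingTheory.Sequence.IsWeaklyRegular R fs)
    [IsLocalRing (R ⧸ Ideal.ofList fs)]
    (M : Type) [AddCommGroup M] [Module (R ⧸ Ideal.ofList fs) M]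
    [Module.Finite (R ⧸ Ideal.ofList fs) M]
    (dS tS : ℕ) (hdS : ringKrullDim (R ⧸ Ideal.ofList fs) = (dS : WithBot ℕ∞))
    (htS : depth (R ⧸ Ideal.ofList fs) M = (tS : ℕ∞)) :
    ((dS - tS ≤ 1) →
      (∃ a : ℕ, dS - tS + 2 ≤ a ∧ ∀ i : ℕ, a ≤ i → i ≤ a + (d + c) →
        ExtVanish (R ⧸ Ideal.ofList fs) M M i) →
      ProjDimFinite (R ⧸ Ideal.ofList fs) M ∨ InjDimFinite (R ⧸ Ideal.ofList fs) M) ∧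
    ((∀ i : ℕ, dS - tS + 2 ≤ i → i ≤ dS - tS + (d + c) + 2 →
        ExtVanish (R ⧸ Ideal.ofList fs) M M i) →
      (∀ j : ℕ, 1 ≤ j → j ≤ 2 * (dS - tS) + (d + c) + 2 →
        ExtVanish (R ⧸ Ideal.ofList fs) M (R ⧸ Ideal.ofList fs) j) →
      Module.Free (R ⧸ Ideal.ofList fs) M) := by
  obtain ⟨xs, hxl, hm, hr, hq⟩ := hmin
  have hdb : d ≤ dS + c := hlen ▸ dim_bound R fs hmem d dS hdim hdS
  let mM : Module R M := Module.compHom M (algebraMap R (R ⧸ Ideal.ofList fs))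
  have tM : IsScalarTower R (R ⧸ Ideal.ofList fs) M := IsScalarTower.of_algebraMap_smul fun _ _ => rfl
  have hs : Function.Surjective (algebraMap R (R ⧸ Ideal.ofList fs)) := Ideal.Quotient.mk_surjective
  have hk : RingHom.ker (algebraMap R (R ⧸ Ideal.ofList fs)) = Ideal.ofList fs := Ideal.mk_ker
  have fM : Module.Finite R M := Module.Finite.trans (R ⧸ Ideal.ofList fs) M
  have hdep := depth_k R fs M tS htS
  -- everything from a window of vanishing
  have main : ∀ a, dS - tS + 2 ≤ a →
      (∀ i : ℕ, a ≤ i → i ≤ a + (d + c) → EV (R ⧸ Ideal.ofList fs) M M i) →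
      (∀ N : ModuleCat.{0} (R ⧸ Ideal.ofList fs), ∀ i, a + c ≤ i → EV (R ⧸ Ideal.ofList fs) M N i) ∨
      ((∃ q, 1 ≤ q ∧ ∀ (N : ModuleCat.{0} (R ⧸ Ideal.ofList fs)), ∀ i, q ≤ i →
          EV (R ⧸ Ideal.ofList fs) N M i) ∧
       ((∀ i : ℕ, a ≤ i → i ≤ a + (d + c) → EV (R ⧸ Ideal.ofList fs) M (R ⧸ Ideal.ofList fs) i) →
        ∀ N : ModuleCat.{0} (R ⧸ Ideal.ofList fs), ∀ i, a + c ≤ i → EV (R ⧸ Ideal.ofList fs) M N i)) := by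
    intro a ha h
    obtain ⟨n, rfl⟩ : ∃ n, a = n + 2 := ⟨a - 2, by omega⟩
    obtain ⟨L, fL, hL1, hL2, hL3, hL4⟩ := lemA hm hr hq (n + c) tS M hdep (by omega)
    -- descent of projective dimension
    have pd : (∀ (N : Type) [AddCommGroup N] [Module R N] (i : ℕ), EV R L N (i+1)) →
        ∀ N : ModuleCat.{0} (R ⧸ Ideal.ofList fs), ∀ i, n + 2 + c ≤ i →
          EV (R ⧸ Ideal.ofList fs) M N i := by
      intro hL N
      let mN : Module R N := Module.compHom N (algebraMap R (R ⧸ Ideal.ofList fs))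
      have tN : IsScalarTower R (R ⧸ Ideal.ofList fs) N :=
        IsScalarTower.of_algebraMap_smul fun _ _ => rfl
      refine chain_pd (n+2) (d+c) (by omega) h c (by omega) (n+2+c) (by omega) R fs hlen hreg hs hk ?_
      intro i hi
      obtain ⟨j, rfl⟩ : ∃ j, i = j + (n + c) + 2 := ⟨i - 2 - (n + c), by omega⟩
      exact (hL1 (ModuleCat.of R N) j).2 (hL N j)
    cases subsingleton_or_nontrivial L with
    | inl h0 => exact Or.inl (pd fun N _ _ i => ev_sub_left _)
    | inr h0 =>
      right
      have hB : ∀ (N : Type) [AddCommGroup N] [Module R N],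
          (∀ i, n + 2 + c ≤ i → i ≤ n + 2 + (d + c) → EV R M N i) →
          ∀ i, xs.length + 1 ≤ i → EV R (R ⧸ maximalIdeal R) N i := by
        intro N _ _ hN
        refine lemB hm hr hq hL2 hL3 (fun i hi => ?_)
        exact (hL1 (ModuleCat.of R N) i).1 (hN _ (by omega) (by omega))
      have hkM := hB M (chain_up (n+2) (d+c) (by omega) h c R fs hlen hreg hs hk)
      refine ⟨?_, fun hS => ?_⟩
      · obtain ⟨q, hq1, hq2⟩ := lemD hm hr hq M _ hkM
        refine ⟨q, hq1, fun N => ?_⟩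
        let mN : Module R N := Module.compHom N (algebraMap R (R ⧸ Ideal.ofList fs))
        have tN : IsScalarTower R (R ⧸ Ideal.ofList fs) N :=
          IsScalarTower.of_algebraMap_smul fun _ _ => rfl
        exact chain_id (n+2) (d+c) (by omega) h c (by omega) q hq1 R fs hlen hreg hs hk (hq2 N)
      · have hkS := hB (R ⧸ Ideal.ofList fs) (chain_up (n+2) (d+c) (by omega) hS c R fs hlen hreg hs hk)
        have hkR : ∀ i, xs.length + 1 ≤ i → EV R (R ⧸ maximalIdeal R) R i := by
          intro i hi
          refine ql_cov fs ?_ R hreg i ?_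
          · intro x hx y
            obtain ⟨y, rfl⟩ := Submodule.Quotient.mk_surjective _ y
            rw [← Submodule.Quotient.mk_smul, Submodule.Quotient.mk_eq_zero]
            exact Ideal.mul_mem_right _ _ (hmem x hx)
          · exact (ev_congr_right (Submodule.quotEquivOfEq _ _ (by simp))).1 (hkS i hi)
        obtain ⟨q, hkL⟩ := hL4 ⟨_, fun i hi => ⟨hkM i hi, hkR i hi⟩⟩
        have := ql_nontriv hm L
        have hkk := k2' hm hr hq q (fun i hi => ev_of_v_right hL3 (ql_large xs q L hL2 hkL i hi))
        exact pd fun N _ _ i => lemE hm hr hq hL2 hL3 hkk N i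
  refine ⟨?_, ?_⟩
  · rintro - ⟨a, ha, h⟩
    rcases main a ha (fun i h1 h2 => (extVanish_iff (by omega)).1 (h i h1 h2)) with h1 | ⟨⟨q, hq1, h1⟩, -⟩
    · exact Or.inl ⟨a + c, fun N i hi => (extVanish_iff (by omega)).2 (h1 N i hi)⟩
    · exact Or.inr ⟨q, fun N i hi => (extVanish_iff (by omega)).2 (h1 N i hi)⟩
  · intro h hS
    have hpd : ∀ N : ModuleCat.{0} (R ⧸ Ideal.ofList fs), ∀ i, dS - tS + 2 + c ≤ i →
        EV (R ⧸ Ideal.ofList fs) M N i := by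
      rcases main (dS - tS + 2) le_rfl
        (fun i h1 h2 => (extVanish_iff (by omega)).1 (h i h1 (by omega))) with h1 | ⟨-, h1⟩
      · exact h1
      · exact h1 fun i h1 h2 => (extVanish_iff (by omega)).1 (hS i (by omega) (by omega))
    refine free_of M (dS - tS + 1 + c) (fun N i hi => hpd N _ (by omega)) (fun i hi => ?_)
    exact (extVanish_iff (by omega)).1 (hS _ (by omega) (by omega))
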